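/- arXiv:math/0105118 — 7 statements merged into one kernel-verified Lean document; each statement's English description precedes it below -/
import Mathlib

section
/- Let T>0, let ρ₀,u₀,v₀:ℝ²→ℝ be continuous, and for j∈{+,−} let a_j,b_j:[0,T]×ℝ→ℝ be C¹. Write ρ₀^j(τ,l):=ρ₀(a_j(τ,l),b_j(τ,l)), u₀^j(τ,l):=u₀(a_j(τ,l),b_j(τ,l)), v₀^j(τ,l):=v₀(a_j(τ,l),b_j(τ,l)), and ω_j(τ,l):=∂_τa_j(τ,l)·∂_lb_j(τ,l) − ∂_τb_j(τ,l)·∂_la_j(τ,l). Define P̃(t,l)=∫₀ᵗ(ρ₀⁺ω₊ − ρ₀⁻ω₋)dτ, Ĩ(t,l)=∫₀ᵗ(ρ₀⁺u₀⁺ω₊ − ρ₀⁻u₀⁻ω₋)dτ, J̃(t,l)=∫₀ᵗ(ρ₀⁺v₀⁺ω₊ − ρ₀⁻v₀⁻ω₋)dτ. Let x^s,y^s:[0,T]×ℝ→ℝ be continuous, differentiable in t for t∈(0,T], such that P̃(t,l)>0, ∂_t x^s(t,l)=Ĩ(t,l)/P̃(t,l) and ∂_t y^s(t,l)=J̃(t,l)/P̃(t,l)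 for all t∈(0,T], and suppose that for j∈{+,−} and all τ∈[0,T], l∈ℝ: x^s(τ,l)=a_j(τ,l)+τ·u₀^j(τ,l) and y^s(τ,l)=b_j(τ,l)+τ·v₀^j(τ,l). Then for every t∈(0,T] and l∈ℝ: ∫₀ᵗ[x^s(t,l) − a₊(τ,l) − t·u₀⁺(τ,l)]·ρ₀⁺(τ,l)·ω₊(τ,l)dτ = ∫₀ᵗ[x^s(t,l) − a₋(τ,l) − t·u₀⁻(τ,l)]·ρ₀⁻(τ,l)·ω₋(τ,l)dτ, and likewise ∫₀ᵗ[y^s(t,l) − b₊(τ,l) − t·v₀⁺(τ,l)]·ρ₀⁺·ω₊ dτ = ∫₀ᵗ[y^s(t,l) − b₋(τ,l) − t·v₀⁻(τ,l)]·ρ₀⁻·ω₋ dτ. -/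
/-!
Fix `l` and let `P`, `I`, `Q` be the integrals over `[0, t]` of the net rates
`p = ρ⁺ω⁺ - ρ⁻ω⁻`, `i = ρ⁺u⁺ω⁺ - ρ⁻u⁻ω⁻`, `q = ρ⁺a⁺ω⁺ - ρ⁻a⁻ω⁻` of mass, momentum and first moment
of the absorbed characteristics. Since both characteristics end at the shock point,
`p x = q + τ i`, while the velocity law reads `P x' = I`. Hence `(P x - t I)' = p x - t i = q`, so
`P x - t I = Q`, which is the adhesion identity with both sides collected. The two space coordinates
are treated separately by the same argument.
-/

open MeasureTheory Set

section PartialDerivatives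

variable {𝕜 X F : Type*} [NontriviallyNormedField 𝕜] [NormedAddCommGroup X] [NormedSpace 𝕜 X]
  [NormedAddCommGroup F] [NormedSpace 𝕜 F]

theorem continuous_deriv_of_contDiff_uncurry {f : X → 𝕜 → F} {g : X → 𝕜}
    (hf : ContDiff 𝕜 1 (Function.uncurry f)) (hg : Continuous g) :
    Continuous fun x => deriv (f x) (g x) := by
  simp only [← fderiv_apply_one_eq_deriv]
  exact (Continuous.fderiv hf hg le_rfl).clm_apply continuous_const

/-- The Jacobian determinant `∂(a, b)/∂(τ, l)` of the map `(τ, l) ↦ (a τ l, b τ l)`, written with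
one-variable derivatives; it is the paper's `ω` for the initial points `(a, b)` of the
characteristics arriving from one side of the shock. -/
noncomputable def jacobianDet (a b : 𝕜 → 𝕜 → 𝕜) (τ l : 𝕜) : 𝕜 :=
  deriv (fun s => a s l) τ * deriv (fun m => b τ m) l -
    deriv (fun s => b s l) τ * deriv (fun m => a τ m) l

theorem continuous_jacobianDet {a b : 𝕜 → 𝕜 → 𝕜}
    (ha : ContDiff 𝕜 1 fun p : 𝕜 × 𝕜 => a p.1 p.2)
    (hb : ContDiff 𝕜 1 fun p : 𝕜 × 𝕜 => b p.1 p.2) :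
    Continuous fun p : 𝕜 × 𝕜 => jacobianDet a b p.1 p.2 := by
  have continuous_deriv_fst {f : 𝕜 → 𝕜 → 𝕜} (hf : ContDiff 𝕜 1 fun p : 𝕜 × 𝕜 => f p.1 p.2) :
      Continuous fun p : 𝕜 × 𝕜 => deriv (fun s => f s p.2) p.1 :=
    continuous_deriv_of_contDiff_uncurry
      (hf.comp (contDiff_snd.prodMk (contDiff_snd.comp contDiff_fst))) continuous_fst
  have continuous_deriv_snd {f : 𝕜 → 𝕜 → 𝕜} (hf : ContDiff 𝕜 1 fun p : 𝕜 × 𝕜 => f p.1 p.2) :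
      Continuous fun p : 𝕜 × 𝕜 => deriv (fun m => f p.1 m) p.2 :=
    continuous_deriv_of_contDiff_uncurry
      (hf.comp ((contDiff_fst.comp contDiff_fst).prodMk contDiff_snd)) continuous_snd
  exact ((continuous_deriv_fst ha).mul (continuous_deriv_snd hb)).sub
    ((continuous_deriv_fst hb).mul (continuous_deriv_snd ha))

end PartialDerivatives

section Adhesion

variable {E : Type*} [NormedAddCommGroup E] [NormedSpace ℝ E]

theorem continuousOn_integral_of_continuousOn_Icc {f : ℝ → E} {a b : ℝ}
    (hf : ContinuousOn f (Icc a b)) :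
    ContinuousOn (fun u => ∫ τ in a..u, f τ) (Icc a b) := by
  rcases le_or_gt a b with hab | hba
  · rw [← uIcc_of_le hab] at hf ⊢
    exact intervalIntegral.continuousOn_primitive_interval hf.integrableOn_uIcc
  · simp only [Icc_eq_empty hba.not_ge, continuousOn_empty]

variable [CompleteSpace E]

theorem hasDerivAt_integral_of_continuousOn_Icc {f : ℝ → E} {a b s : ℝ}
    (hf : ContinuousOn f (Icc a b)) (hs : s ∈ Ioo a b) :
    HasDerivAt (fun u => ∫ τ in a..u, f τ) (f s) s := by
  have integrable : IntervalIntegrable f volume a s :=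
    (hf.mono (Icc_subset_Icc_right hs.2.le)).intervalIntegrable_of_Icc hs.1.le
  exact intervalIntegral.integral_hasDerivAt_right integrable
    ((hf.mono Ioo_subset_Icc_self).stronglyMeasurableAtFilter isOpen_Ioo s hs)
    (hf.continuousAt (Icc_mem_nhds hs.1 hs.2))

variable {t : ℝ} {x v : ℝ → E}

theorem integral_smul_sub_id_smul_of_hasDerivAt {p : ℝ → ℝ} {i : ℝ → E} (ht : 0 ≤ t)
    (hp : ContinuousOn p (Icc 0 t)) (hi : ContinuousOn i (Icc 0 t))
    (hx : ContinuousOn x (Icc 0 t)) (hxv : ∀ s ∈ Ioo 0 t, HasDerivAt x (v s) s)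
    (hv : ∀ s ∈ Ioo 0 t, (∫ τ in 0..s, p τ) • v s = ∫ τ in 0..s, i τ) :
    ∫ τ in 0..t, (p τ • x τ - τ • i τ) =
      (∫ τ in 0..t, p τ) • x t - t • ∫ τ in 0..t, i τ := by
  have continuousOn_gap : ContinuousOn
      (fun s => (∫ τ in 0..s, p τ) • x s - s • ∫ τ in 0..s, i τ) (Icc 0 t) :=
    ((continuousOn_integral_of_continuousOn_Icc hp).smul hx).sub
      (continuousOn_id.smul (continuousOn_integral_of_continuousOn_Icc hi))
  have hasDerivAt_gap : ∀ s ∈ Ioo 0 t, HasDerivAt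
      (fun s => (∫ τ in 0..s, p τ) • x s - s • ∫ τ in 0..s, i τ)
      (p s • x s - s • i s) s := by
    intro s hs
    have derivP := hasDerivAt_integral_of_continuousOn_Icc hp hs
    have derivI := hasDerivAt_integral_of_continuousOn_Icc hi hs
    refine ((derivP.smul (hxv s hs)).sub ((hasDerivAt_id s).smul derivI)).congr_deriv ?_
    rw [hv s hs, id, one_smul]
    abel
  simpa using intervalIntegral.integral_eq_sub_of_hasDerivAt_of_le ht continuousOn_gap
    hasDerivAt_gap
    (((hp.smul hx).sub (continuousOn_id.smul hi)).intervalIntegrable_of_Icc ht)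

theorem integral_smul_const_sub_sub_smul {m : ℝ → ℝ} {a u : ℝ → E} {α β : ℝ}
    (hm : IntervalIntegrable m volume α β)
    (hma : IntervalIntegrable (fun τ => m τ • a τ) volume α β)
    (hmu : IntervalIntegrable (fun τ => m τ • u τ) volume α β) (c : E) (t : ℝ) :
    ∫ τ in α..β, m τ • (c - a τ - t • u τ) =
      (∫ τ in α..β, m τ) • c - (∫ τ in α..β, m τ • a τ) - t • ∫ τ in α..β, m τ • u τ := by
  have hmc : IntervalIntegrable (fun τ => m τ • c) volume α β :=
    ⟨hm.1.smul_const c, hm.2.smul_const c⟩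
  have htmu : IntervalIntegrable (fun τ => t • m τ • u τ) volume α β := hmu.smul t
  simp only [smul_sub, smul_comm _ t]
  rw [intervalIntegral.integral_sub (hmc.sub hma) htmu,
    intervalIntegral.integral_sub hmc hma, intervalIntegral.integral_smul_const,
    intervalIntegral.integral_smul]

theorem integral_adhesion_eq {m₁ m₂ : ℝ → ℝ} {a₁ a₂ u₁ u₂ : ℝ → E} (ht : 0 ≤ t)
    (hm₁ : ContinuousOn m₁ (Icc 0 t)) (hm₂ : ContinuousOn m₂ (Icc 0 t))
    (ha₁ : ContinuousOn a₁ (Icc 0 t)) (ha₂ : ContinuousOn a₂ (Icc 0 t))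
    (hu₁ : ContinuousOn u₁ (Icc 0 t)) (hu₂ : ContinuousOn u₂ (Icc 0 t))
    (hxv : ∀ s ∈ Ioo 0 t, HasDerivAt x (v s) s)
    (hv : ∀ s ∈ Ioo 0 t, (∫ τ in 0..s, (m₁ τ - m₂ τ)) • v s =
      ∫ τ in 0..s, (m₁ τ • u₁ τ - m₂ τ • u₂ τ))
    (hx₁ : ∀ s ∈ Icc 0 t, x s = a₁ s + s • u₁ s)
    (hx₂ : ∀ s ∈ Icc 0 t, x s = a₂ s + s • u₂ s) :
    ∫ τ in 0..t, m₁ τ • (x t - a₁ τ - t • u₁ τ) =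
      ∫ τ in 0..t, m₂ τ • (x t - a₂ τ - t • u₂ τ) := by
  have hx : ContinuousOn x (Icc 0 t) := (ha₁.add (continuousOn_id.smul hu₁)).congr hx₁
  have net_moment_rate : ∀ s ∈ uIcc 0 t, m₁ s • a₁ s - m₂ s • a₂ s =
      (m₁ s - m₂ s) • x s - s • (m₁ s • u₁ s - m₂ s • u₂ s) := by
    intro s hs
    rw [uIcc_of_le ht] at hs
    linear_combination (norm := module) m₂ s • hx₂ s hs - m₁ s • hx₁ s hs
  have moment : ∫ τ in 0..t, (m₁ τ • a₁ τ - m₂ τ • a₂ τ) =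
      (∫ τ in 0..t, (m₁ τ - m₂ τ)) • x t - t • ∫ τ in 0..t, (m₁ τ • u₁ τ - m₂ τ • u₂ τ) :=
    (intervalIntegral.integral_congr net_moment_rate).trans
      (integral_smul_sub_id_smul_of_hasDerivAt ht (hm₁.sub hm₂)
        ((hm₁.smul hu₁).sub (hm₂.smul hu₂)) hx hxv hv)
  have integrable_smul {m : ℝ → ℝ} {f : ℝ → E} (hm : ContinuousOn m (Icc 0 t))
      (hf : ContinuousOn f (Icc 0 t)) : IntervalIntegrable (fun τ => m τ • f τ) volume 0 t :=
    (hm.smul hf).intervalIntegrable_of_Icc ht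
  have im₁ : IntervalIntegrable m₁ volume 0 t := hm₁.intervalIntegrable_of_Icc ht
  have im₂ : IntervalIntegrable m₂ volume 0 t := hm₂.intervalIntegrable_of_Icc ht
  have ia₁ := integrable_smul hm₁ ha₁
  have ia₂ := integrable_smul hm₂ ha₂
  have iu₁ := integrable_smul hm₁ hu₁
  have iu₂ := integrable_smul hm₂ hu₂
  rw [intervalIntegral.integral_sub ia₁ ia₂, intervalIntegral.integral_sub im₁ im₂,
    intervalIntegral.integral_sub iu₁ iu₂] at moment
  rw [integral_smul_const_sub_sub_smul im₁ ia₁ iu₁, integral_smul_const_sub_sub_smul im₂ ia₂ iu₂]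
  linear_combination (norm := module) -moment

theorem integral_adhesion_eq_of_hasDerivAt_div {T : ℝ}
    {x a₁ a₂ u₁ u₂ ρ₁ ρ₂ ω₁ ω₂ P I : ℝ → ℝ}
    (ha₁ : Continuous a₁) (ha₂ : Continuous a₂) (hu₁ : Continuous u₁) (hu₂ : Continuous u₂)
    (hρ₁ : Continuous ρ₁) (hρ₂ : Continuous ρ₂) (hω₁ : Continuous ω₁) (hω₂ : Continuous ω₂)
    (hP : ∀ s, P s = ∫ τ in 0..s, (ρ₁ τ * ω₁ τ - ρ₂ τ * ω₂ τ))
    (hI : ∀ s, I s = ∫ τ in 0..s, (ρ₁ τ * u₁ τ * ω₁ τ - ρ₂ τ * u₂ τ * ω₂ τ))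
    (hP₀ : ∀ s ∈ Ioc 0 T, P s ≠ 0)
    (hx : ∀ s ∈ Ioc 0 T, HasDerivAt x (I s / P s) s)
    (hchar : ∀ s ∈ Icc 0 T, x s = a₁ s + s * u₁ s ∧ x s = a₂ s + s * u₂ s)
    (ht : t ∈ Ioc 0 T) :
    ∫ τ in 0..t, (x t - a₁ τ - t * u₁ τ) * ρ₁ τ * ω₁ τ =
      ∫ τ in 0..t, (x t - a₂ τ - t * u₂ τ) * ρ₂ τ * ω₂ τ := by
  have Ioo_subset : Ioo 0 t ⊆ Ioc 0 T := fun s hs => ⟨hs.1, hs.2.le.trans ht.2⟩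
  have Icc_subset : Icc 0 t ⊆ Icc 0 T := Icc_subset_Icc_right ht.2
  have momentum : ∀ s ∈ Ioo 0 t, (∫ τ in 0..s, (ρ₁ τ * ω₁ τ - ρ₂ τ * ω₂ τ)) • (I s / P s) =
      ∫ τ in 0..s, ((ρ₁ τ * ω₁ τ) • u₁ τ - (ρ₂ τ * ω₂ τ) • u₂ τ) := by
    intro s hs
    simp only [← hP, smul_eq_mul, mul_right_comm _ _ (u₁ _), mul_right_comm _ _ (u₂ _), ← hI]
    exact mul_div_cancel₀ _ (hP₀ s (Ioo_subset hs))
  have adhesion := integral_adhesion_eq ht.1.le (hρ₁.mul hω₁).continuousOn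
    (hρ₂.mul hω₂).continuousOn ha₁.continuousOn ha₂.continuousOn hu₁.continuousOn
    hu₂.continuousOn (fun s hs => hx s (Ioo_subset hs)) momentum
    (fun s hs => (hchar s (Icc_subset hs)).1) (fun s hs => (hchar s (Icc_subset hs)).2)
  simpa only [Pi.mul_apply, smul_eq_mul, mul_comm (_ * _) (_ - _), ← mul_assoc] using adhesion

end Adhesion

/-- Generalized Rankine–Hugoniot / adhesion identities (Theorem 2.2 of the paper). -/
theorem stmt_0
    (T : ℝ) (hT : 0 < T)
    (ρ₀ u₀ v₀ : ℝ → ℝ → ℝ)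
    (hρ₀ : Continuous fun p : ℝ × ℝ => ρ₀ p.1 p.2)
    (hu₀ : Continuous fun p : ℝ × ℝ => u₀ p.1 p.2)
    (hv₀ : Continuous fun p : ℝ × ℝ => v₀ p.1 p.2)
    (aP bP aM bM : ℝ → ℝ → ℝ)
    (haP : ContDiff ℝ 1 fun p : ℝ × ℝ => aP p.1 p.2)
    (hbP : ContDiff ℝ 1 fun p : ℝ × ℝ => bP p.1 p.2)
    (haM : ContDiff ℝ 1 fun p : ℝ × ℝ => aM p.1 p.2)
    (hbM : ContDiff ℝ 1 fun p : ℝ × ℝ => bM p.1 p.2)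
    (ωP ωM : ℝ → ℝ → ℝ)
    (hωP : ∀ τ l, ωP τ l =
      deriv (fun s => aP s l) τ * deriv (fun m => bP τ m) l -
      deriv (fun s => bP s l) τ * deriv (fun m => aP τ m) l)
    (hωM : ∀ τ l, ωM τ l =
      deriv (fun s => aM s l) τ * deriv (fun m => bM τ m) l -
      deriv (fun s => bM s l) τ * deriv (fun m => aM τ m) l)
    (Pt It Jt : ℝ → ℝ → ℝ)
    (hPt : ∀ t l, Pt t l = ∫ τ in (0:ℝ)..t,
      (ρ₀ (aP τ l) (bP τ l) * ωP τ l - ρ₀ (aM τ l) (bM τ l) * ωM τ l))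
    (hIt : ∀ t l, It t l = ∫ τ in (0:ℝ)..t,
      (ρ₀ (aP τ l) (bP τ l) * u₀ (aP τ l) (bP τ l) * ωP τ l -
       ρ₀ (aM τ l) (bM τ l) * u₀ (aM τ l) (bM τ l) * ωM τ l))
    (hJt : ∀ t l, Jt t l = ∫ τ in (0:ℝ)..t,
      (ρ₀ (aP τ l) (bP τ l) * v₀ (aP τ l) (bP τ l) * ωP τ l -
       ρ₀ (aM τ l) (bM τ l) * v₀ (aM τ l) (bM τ l) * ωM τ l))
    (xs ys : ℝ → ℝ → ℝ)
    (hxsc : Continuous fun p : ℝ × ℝ => xs p.1 p.2)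
    (hysc : Continuous fun p : ℝ × ℝ => ys p.1 p.2)
    (hPpos : ∀ t ∈ Set.Ioc (0:ℝ) T, ∀ l : ℝ, 0 < Pt t l)
    (hxt : ∀ t ∈ Set.Ioc (0:ℝ) T, ∀ l : ℝ,
      HasDerivAt (fun s => xs s l) (It t l / Pt t l) t)
    (hyt : ∀ t ∈ Set.Ioc (0:ℝ) T, ∀ l : ℝ,
      HasDerivAt (fun s => ys s l) (Jt t l / Pt t l) t)
    (hxchar : ∀ τ ∈ Set.Icc (0:ℝ) T, ∀ l : ℝ,
      xs τ l = aP τ l + τ * u₀ (aP τ l) (bP τ l) ∧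
      xs τ l = aM τ l + τ * u₀ (aM τ l) (bM τ l))
    (hychar : ∀ τ ∈ Set.Icc (0:ℝ) T, ∀ l : ℝ,
      ys τ l = bP τ l + τ * v₀ (aP τ l) (bP τ l) ∧
      ys τ l = bM τ l + τ * v₀ (aM τ l) (bM τ l)) :
    ∀ t ∈ Set.Ioc (0:ℝ) T, ∀ l : ℝ,
      (∫ τ in (0:ℝ)..t, (xs t l - aP τ l - t * u₀ (aP τ l) (bP τ l)) *
          ρ₀ (aP τ l) (bP τ l) * ωP τ l) =
      (∫ τ in (0:ℝ)..t, (xs t l - aM τ l - t * u₀ (aM τ l) (bM τ l)) *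
          ρ₀ (aM τ l) (bM τ l) * ωM τ l) ∧
      (∫ τ in (0:ℝ)..t, (ys t l - bP τ l - t * v₀ (aP τ l) (bP τ l)) *
          ρ₀ (aP τ l) (bP τ l) * ωP τ l) =
      (∫ τ in (0:ℝ)..t, (ys t l - bM τ l - t * v₀ (aM τ l) (bM τ l)) *
          ρ₀ (aM τ l) (bM τ l) * ωM τ l) := by
  intro t ht l
  obtain rfl : ωP = jacobianDet aP bP := funext₂ hωP
  obtain rfl : ωM = jacobianDet aM bM := funext₂ hωM
  have slice {f : ℝ → ℝ → ℝ} (hf : Continuous fun p : ℝ × ℝ => f p.1 p.2) :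
      Continuous fun τ => f τ l :=
    hf.comp (.prodMk_left l)
  have caP := slice haP.continuous
  have cbP := slice hbP.continuous
  have caM := slice haM.continuous
  have cbM := slice hbM.continuous
  have cωP := slice (continuous_jacobianDet haP hbP)
  have cωM := slice (continuous_jacobianDet haM hbM)
  have cρP := hρ₀.comp (caP.prodMk cbP)
  have cρM := hρ₀.comp (caM.prodMk cbM)
  exact ⟨integral_adhesion_eq_of_hasDerivAt_div caP caM (hu₀.comp (caP.prodMk cbP))
      (hu₀.comp (caM.prodMk cbM)) cρP cρM cωP cωM (hPt · l) (hIt · l)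
      (fun s hs => (hPpos s hs l).ne') (hxt · · l) (hxchar · · l) ht,
    integral_adhesion_eq_of_hasDerivAt_div cbP cbM (hv₀.comp (caP.prodMk cbP))
      (hv₀.comp (caM.prodMk cbM)) cρP cρM cωP cωM (hPt · l) (hJt · l)
      (fun s hs => (hPpos s hs l).ne') (hyt · · l) (hychar · · l) ht⟩
end

section
/- Let f:ℝ²→ℝ be of class C³, let l₀∈ℝ and ε>0. Suppose that for every t∈(0,ε): f(l₀,−t/2) − f(l₀,0) − (1/4)∫₀ᵗ(τ − τ²/t)·∂₁²f(l₀,−τ/2)dτ + (1/2)∫₀ᵗ∂₂f(l₀,−τ/2)dτ = 0, where ∂₁ denotes the partial derivative in the first variable and ∂₂ the partial derivative in the second variable. Then ∂₁²f(l₀,0) = 0. -/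
/-!
The last integral of the identity cancels `f l₀ (-t / 2) - f l₀ 0` by the fundamental theorem of
calculus, so only the integral of `g τ = ∂₁²f (l₀, -τ / 2)` against `τ - τ ^ 2 / t` remains.
Substituting `τ = t * u` turns it into `t ^ 2` times `∫ u in 0..1, (u - u ^ 2) • g (t * u)`, which
depends continuously on `t`. Dividing by `t ^ 2` and letting `t → 0` leaves `(1 / 6) • g 0 = 0`.
-/

open Filter Topology

section PartialDerivatives

variable {𝕜 X E : Type*} [NontriviallyNormedField 𝕜] [NormedAddCommGroup X] [NormedSpace 𝕜 X]
  [NormedAddCommGroup E] [NormedSpace 𝕜 E] {f : 𝕜 → X → E}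

theorem contDiff_deriv_left {m n : WithTop ℕ∞} (hf : ContDiff 𝕜 n fun p : 𝕜 × X => f p.1 p.2)
    (hmn : m + 1 ≤ n) : ContDiff 𝕜 m fun p : 𝕜 × X => deriv (fun s => f s p.2) p.1 := by
  have hf_swap : ContDiff 𝕜 n (Function.uncurry fun (p : 𝕜 × X) s => f s p.2) :=
    hf.comp (contDiff_snd.prodMk contDiff_fst.snd)
  exact hf_swap.fderiv_apply contDiff_fst contDiff_const hmn

theorem continuous_deriv_deriv_left (hf : ContDiff 𝕜 2 fun p : 𝕜 × X => f p.1 p.2) :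
    Continuous fun p : 𝕜 × X => deriv (deriv fun s => f s p.2) p.1 := by
  have hf' : ContDiff 𝕜 1 fun p : 𝕜 × X => deriv (fun s => f s p.2) p.1 :=
    contDiff_deriv_left hf one_add_one_eq_two.le
  exact (contDiff_deriv_left (f := fun s x => deriv (fun s' => f s' x) s) (m := 0) hf'
    (zero_add 1).le).continuous

end PartialDerivatives

section KernelIntegral

variable {E : Type*} [NormedAddCommGroup E] [NormedSpace ℝ E]

theorem integral_sub_sq_div_smul (g : ℝ → E) (t : ℝ) :
    ∫ τ in (0 : ℝ)..t, (τ - τ ^ 2 / t) • g τ =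
      t ^ 2 • ∫ u in (0 : ℝ)..1, (u - u ^ 2) • g (t * u) := by
  have kernel_mul (u : ℝ) : t * u - (t * u) ^ 2 / t = t * (u - u ^ 2) := by
    obtain rfl | ht := eq_or_ne t 0
    · simp
    · field_simp
  calc ∫ τ in (0 : ℝ)..t, (τ - τ ^ 2 / t) • g τ
      = t • ∫ u in (0 : ℝ)..1, (t * u - (t * u) ^ 2 / t) • g (t * u) := by
        rw [intervalIntegral.smul_integral_comp_mul_left (fun τ => (τ - τ ^ 2 / t) • g τ),
          mul_zero, mul_one]
    _ = t ^ 2 • ∫ u in (0 : ℝ)..1, (u - u ^ 2) • g (t * u) := by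
        simp only [kernel_mul, mul_smul, intervalIntegral.integral_smul, sq t]

theorem integral_sub_sq_zero_one : ∫ u in (0 : ℝ)..1, (u - u ^ 2) = 1 / 6 := by
  rw [intervalIntegral.integral_sub intervalIntegral.intervalIntegrable_id
    (intervalIntegral.intervalIntegrable_pow 2), integral_id, integral_pow]
  norm_num

variable [CompleteSpace E]

theorem smul_integral_deriv_comp_mul_left {φ : ℝ → E} (hφ : ContDiff ℝ 1 φ) (a b c : ℝ) :
    c • ∫ τ in a..b, deriv φ (c * τ) = φ (c * b) - φ (c * a) := by
  rw [intervalIntegral.smul_integral_comp_mul_left,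
    intervalIntegral.integral_deriv_of_contDiffOn_uIcc hφ.contDiffOn]

theorem eq_zero_of_frequently_integral_smul_comp_mul_eq_zero {w : ℝ → ℝ} {g : ℝ → E} {a b : ℝ}
    (hw : Continuous w) (hw_ne : ∫ u in a..b, w u ≠ 0) (hg : Continuous g)
    (h : ∃ᶠ t in 𝓝 0, ∫ u in a..b, w u • g (t * u) = 0) : g 0 = 0 := by
  have hcont : Continuous fun t => ∫ u in a..b, w u • g (t * u) :=
    intervalIntegral.continuous_parametric_intervalIntegral_of_continuous' (by fun_prop) a b
  have hlim : ∫ u in a..b, w u • g (0 * u) = 0 :=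
    isClosed_singleton.mem_of_frequently_of_tendsto h (hcont.tendsto 0)
  simp only [zero_mul, intervalIntegral.integral_smul_const] at hlim
  exact (smul_eq_zero.mp hlim).resolve_left hw_ne

theorem eq_zero_of_frequently_integral_sub_sq_div_smul_eq_zero {g : ℝ → E} (hg : Continuous g)
    (h : ∃ᶠ t in 𝓝[≠] 0, ∫ τ in (0 : ℝ)..t, (τ - τ ^ 2 / t) • g τ = 0) : g 0 = 0 := by
  have hscaled : ∃ᶠ t in 𝓝[≠] 0, ∫ u in (0 : ℝ)..1, (u - u ^ 2) • g (t * u) = 0 := by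
    refine (h.and_eventually eventually_mem_nhdsWithin).mono fun t ⟨hint, ht⟩ => ?_
    rw [integral_sub_sq_div_smul] at hint
    exact (smul_eq_zero.mp hint).resolve_left (pow_ne_zero 2 ht)
  refine eq_zero_of_frequently_integral_smul_comp_mul_eq_zero (by fun_prop) ?_ hg
    (hscaled.filter_mono nhdsWithin_le_nhds)
  norm_num [integral_sub_sq_zero_one]

theorem stmt_1_general {f : ℝ → ℝ → E} (hf : ContDiff ℝ 2 fun p : ℝ × ℝ => f p.1 p.2) (l₀ : ℝ)
    (h : ∃ᶠ t in 𝓝[≠] (0 : ℝ),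
      f l₀ (-t / 2) - f l₀ 0
        - (1 / 4 : ℝ) • (∫ τ in (0 : ℝ)..t,
            (τ - τ ^ 2 / t) • deriv (deriv fun s => f s (-τ / 2)) l₀)
        + (1 / 2 : ℝ) • (∫ τ in (0 : ℝ)..t, deriv (fun m => f l₀ m) (-τ / 2)) = 0) :
    deriv (deriv fun s => f s 0) l₀ = 0 := by
  have hf_right : ContDiff ℝ 1 fun m => f l₀ m :=
    (hf.comp (contDiff_const.prodMk contDiff_id)).of_le one_le_two
  have hftc (t : ℝ) : (1 / 2 : ℝ) • ∫ τ in (0 : ℝ)..t, deriv (fun m => f l₀ m) (-τ / 2) =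
      f l₀ 0 - f l₀ (-t / 2) := by
    have hmul (τ : ℝ) : -τ / 2 = -(1 / 2) * τ := by ring
    have hsmul := smul_integral_deriv_comp_mul_left hf_right 0 t (-(1 / 2))
    simpa only [← hmul, neg_zero, zero_div, neg_smul, neg_eq_iff_eq_neg, neg_sub] using hsmul
  have hg : Continuous fun τ : ℝ => deriv (deriv fun s => f s (-τ / 2)) l₀ :=
    (continuous_deriv_deriv_left hf).comp
      (by fun_prop : Continuous fun τ : ℝ => (l₀, -τ / 2))
  have hkernel : ∃ᶠ t in 𝓝[≠] (0 : ℝ),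
      ∫ τ in (0 : ℝ)..t, (τ - τ ^ 2 / t) • deriv (deriv fun s => f s (-τ / 2)) l₀ = 0 := by
    refine h.mono fun t ht => ?_
    rw [hftc, sub_add_sub_comm] at ht
    simpa using ht
  simpa using eq_zero_of_frequently_integral_sub_sq_div_smul_eq_zero hg hkernel

end KernelIntegral

/-- Key computational lemma in the proof of Theorem 3.1: the matching identity between
the Rankine–Hugoniot shock surface and the variational singularity surface forces
`∂₁²f(l₀,0) = 0`. -/
theorem stmt_1 (f : ℝ → ℝ → ℝ)
    (hf : ContDiff ℝ 3 fun p : ℝ × ℝ => f p.1 p.2)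
    (l₀ ε : ℝ) (hε : 0 < ε)
    (h : ∀ t ∈ Set.Ioo (0:ℝ) ε,
      f l₀ (-t / 2) - f l₀ 0
        - (1 / 4) * (∫ τ in (0:ℝ)..t,
            (τ - τ ^ 2 / t) * deriv (deriv fun s => f s (-τ / 2)) l₀)
        + (1 / 2) * (∫ τ in (0:ℝ)..t, deriv (fun m => f l₀ m) (-τ / 2)) = 0) :
    deriv (deriv fun s => f s 0) l₀ = 0 :=
  stmt_1_general (hf.of_le (by norm_num)) l₀
    ((eventually_of_mem (Ioo_mem_nhdsGT hε) h).frequently.filter_mono (nhdsGT_le_nhdsNE 0))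
end

section
/- Let S₀:ℝ²→ℝ be C² and for j∈{+,−} let a_j,b_j:ℝ²→ℝ be C² functions of (τ,l). Define S_j(τ,l):=S₀(a_j,b_j), u_j:=∂₁S₀(a_j,b_j), v_j:=∂₂S₀(a_j,b_j), and ω_j(τ,l):=∂_τa_j(τ,l)·∂_lb_j(τ,l) − ∂_τb_j(τ,l)·∂_la_j(τ,l). Define p* := (b₊−b₋)(∂_τa₊+∂_τa₋)/2 − (a₊−a₋)(∂_τb₊+∂_τb₋)/2, p := (b₊−b₋)(∂_la₊+∂_la₋)/2 − (a₊−a₋)(∂_lb₊+∂_lb₋)/2, i* := (b₊−b₋)(∂_τS₊+∂_τS₋)/2 − (S₊−S₋)(∂_τb₊+∂_τb₋)/2, i := (b₊−b₋)(∂_lS₊+∂_lS₋)/2 − (S₊−S₋)(∂_lb₊+∂_lb₋)/2, j* := (a₊−a₋)(∂_τS₊+∂_τS₋)/2 − (S₊−S₋)(∂_τa₊+∂_τa₋)/2, j := (a₊−a₋)(∂_lS₊+∂_lS₋)/2 − (S₊−S₋)(∂_la₊+∂_la₋)/2. Then at every point: (1) ω₊ − ω₋ = ∂_l p* − ∂_τ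 p; (2) u₊ω₊ − u₋ω₋ = ∂_l i* − ∂_τ i; (3) −(v₊ω₊ − v₋ω₋) = ∂_l j* − ∂_τ j. -/
/-!
Write `[f] = f₊ - f₋` for the jump and `⟨f⟩ = (f₊ + f₋) / 2` for the mean of a pair of functions.
Each of the pairs `(p*, p)`, `(i*, i)`, `(j*, j)` consists of the two components of a 1-form
`[f] d⟨g⟩ - [g] d⟨f⟩`. Since `d² = 0` (symmetry of second derivatives), its exterior derivative is
`d[f] ∧ d⟨g⟩ + d⟨f⟩ ∧ d[g] = [df ∧ dg]`, the jump of a Jacobian. For `S = S₀(a, b)` the chain rule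
`dS = u da + v db` then gives `dS ∧ db = u da ∧ db` and `dS ∧ da = -v da ∧ db`.
-/

open Function

section PartialDerivatives

variable {𝕜 E : Type*} [NontriviallyNormedField 𝕜] [NormedAddCommGroup E] [NormedSpace 𝕜 E]

/-- The partial derivative of a curried function of two scalar variables in its first variable. -/
noncomputable def partialFst (f : 𝕜 → 𝕜 → E) (x y : 𝕜) : E :=
  deriv (fun s => f s y) x

/-- The partial derivative of a curried function of two scalar variables in its second variable. -/
noncomputable def partialSnd (f : 𝕜 → 𝕜 → E) (x y : 𝕜) : E :=
  deriv (fun m => f x m) y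

variable {f : 𝕜 → 𝕜 → E} {x y : 𝕜}

theorem hasDerivAt_fst_fderiv_uncurry (hf : DifferentiableAt 𝕜 (uncurry f) (x, y)) :
    HasDerivAt (fun s => f s y) (fderiv 𝕜 (uncurry f) (x, y) (1, 0)) x :=
  hf.hasFDerivAt.comp_hasDerivAt (f := (·, y)) x ((hasDerivAt_id x).prodMk (hasDerivAt_const x y))

theorem hasDerivAt_snd_fderiv_uncurry (hf : DifferentiableAt 𝕜 (uncurry f) (x, y)) :
    HasDerivAt (fun m => f x m) (fderiv 𝕜 (uncurry f) (x, y) (0, 1)) y :=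
  hf.hasFDerivAt.comp_hasDerivAt y ((hasDerivAt_const y x).prodMk (hasDerivAt_id y))

theorem partialFst_eq_fderiv_uncurry (hf : DifferentiableAt 𝕜 (uncurry f) (x, y)) :
    partialFst f x y = fderiv 𝕜 (uncurry f) (x, y) (1, 0) :=
  (hasDerivAt_fst_fderiv_uncurry hf).deriv

theorem partialSnd_eq_fderiv_uncurry (hf : DifferentiableAt 𝕜 (uncurry f) (x, y)) :
    partialSnd f x y = fderiv 𝕜 (uncurry f) (x, y) (0, 1) :=
  (hasDerivAt_snd_fderiv_uncurry hf).deriv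

theorem hasDerivAt_partialFst (hf : DifferentiableAt 𝕜 (uncurry f) (x, y)) :
    HasDerivAt (fun s => f s y) (partialFst f x y) x :=
  (hasDerivAt_fst_fderiv_uncurry hf).differentiableAt.hasDerivAt

theorem hasDerivAt_partialSnd (hf : DifferentiableAt 𝕜 (uncurry f) (x, y)) :
    HasDerivAt (fun m => f x m) (partialSnd f x y) y :=
  (hasDerivAt_snd_fderiv_uncurry hf).differentiableAt.hasDerivAt

theorem fderiv_uncurry_apply (hf : DifferentiableAt 𝕜 (uncurry f) (x, y)) (v w : 𝕜) :
    fderiv 𝕜 (uncurry f) (x, y) (v, w) = v • partialFst f x y + w • partialSnd f x y := by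
  have h_basis : (v, w) = v • ((1, 0) : 𝕜 × 𝕜) + w • ((0, 1) : 𝕜 × 𝕜) := by simp
  rw [h_basis, map_add, map_smul, map_smul, partialFst_eq_fderiv_uncurry hf,
    partialSnd_eq_fderiv_uncurry hf]

theorem hasDerivAt_comp₂ {α β : 𝕜 → 𝕜} {α' β' t : 𝕜}
    (hf : DifferentiableAt 𝕜 (uncurry f) (α t, β t))
    (hα : HasDerivAt α α' t) (hβ : HasDerivAt β β' t) :
    HasDerivAt (fun t => f (α t) (β t))
      (α' • partialFst f (α t) (β t) + β' • partialSnd f (α t) (β t)) t := by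
  rw [← fderiv_uncurry_apply hf]
  exact hf.hasFDerivAt.comp_hasDerivAt t (hα.prodMk hβ)

theorem partialFst_comp₂ {a b : 𝕜 → 𝕜 → 𝕜}
    (hf : DifferentiableAt 𝕜 (uncurry f) (a x y, b x y))
    (ha : DifferentiableAt 𝕜 (uncurry a) (x, y)) (hb : DifferentiableAt 𝕜 (uncurry b) (x, y)) :
    partialFst (fun x y => f (a x y) (b x y)) x y =
      partialFst a x y • partialFst f (a x y) (b x y) +
        partialFst b x y • partialSnd f (a x y) (b x y) :=
  (hasDerivAt_comp₂ (α := (a · y)) (β := (b · y)) hf (hasDerivAt_partialFst ha)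
    (hasDerivAt_partialFst hb)).deriv

theorem partialSnd_comp₂ {a b : 𝕜 → 𝕜 → 𝕜}
    (hf : DifferentiableAt 𝕜 (uncurry f) (a x y, b x y))
    (ha : DifferentiableAt 𝕜 (uncurry a) (x, y)) (hb : DifferentiableAt 𝕜 (uncurry b) (x, y)) :
    partialSnd (fun x y => f (a x y) (b x y)) x y =
      partialSnd a x y • partialFst f (a x y) (b x y) +
        partialSnd b x y • partialSnd f (a x y) (b x y) :=
  (hasDerivAt_comp₂ hf (hasDerivAt_partialSnd ha) (hasDerivAt_partialSnd hb)).deriv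

theorem uncurry_partialFst_eventuallyEq (hf : ContDiffAt 𝕜 1 (uncurry f) (x, y)) :
    uncurry (partialFst f) =ᶠ[nhds (x, y)] fun p => fderiv 𝕜 (uncurry f) p (1, 0) := by
  filter_upwards [hf.eventually (by simp)] with p hp
  exact partialFst_eq_fderiv_uncurry (hp.differentiableAt one_ne_zero)

theorem uncurry_partialSnd_eventuallyEq (hf : ContDiffAt 𝕜 1 (uncurry f) (x, y)) :
    uncurry (partialSnd f) =ᶠ[nhds (x, y)] fun p => fderiv 𝕜 (uncurry f) p (0, 1) := by
  filter_upwards [hf.eventually (by simp)] with p hp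
  exact partialSnd_eq_fderiv_uncurry (hp.differentiableAt one_ne_zero)

theorem differentiableAt_fderiv_of_contDiffAt {F : Type*} [NormedAddCommGroup F] [NormedSpace 𝕜 F]
    {φ : F → E} {p : F} (hφ : ContDiffAt 𝕜 2 φ p) : DifferentiableAt 𝕜 (fderiv 𝕜 φ) p :=
  (hφ.fderiv_right (m := 1) le_rfl).differentiableAt one_ne_zero

theorem differentiableAt_uncurry_partialFst (hf : ContDiffAt 𝕜 2 (uncurry f) (x, y)) :
    DifferentiableAt 𝕜 (uncurry (partialFst f)) (x, y) :=
  ((differentiableAt_fderiv_of_contDiffAt hf).clm_apply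
    (differentiableAt_const _)).congr_of_eventuallyEq
    (uncurry_partialFst_eventuallyEq (hf.of_le one_le_two))

theorem differentiableAt_uncurry_partialSnd (hf : ContDiffAt 𝕜 2 (uncurry f) (x, y)) :
    DifferentiableAt 𝕜 (uncurry (partialSnd f)) (x, y) :=
  ((differentiableAt_fderiv_of_contDiffAt hf).clm_apply
    (differentiableAt_const _)).congr_of_eventuallyEq
    (uncurry_partialSnd_eventuallyEq (hf.of_le one_le_two))

theorem partialSnd_partialFst_comm [IsRCLikeNormedField 𝕜]
    (hf : ContDiffAt 𝕜 2 (uncurry f) (x, y)) :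
    partialSnd (partialFst f) x y = partialFst (partialSnd f) x y := by
  have hf₁ : ContDiffAt 𝕜 1 (uncurry f) (x, y) := hf.of_le one_le_two
  have h_fderiv_apply (v w : 𝕜 × 𝕜) :
      fderiv 𝕜 (fun p => fderiv 𝕜 (uncurry f) p v) (x, y) w =
        fderiv 𝕜 (fderiv 𝕜 (uncurry f)) (x, y) w v := by
    simp [fderiv_clm_apply (differentiableAt_fderiv_of_contDiffAt hf) (differentiableAt_const v)]
  have h_symm : IsSymmSndFDerivAt 𝕜 (uncurry f) (x, y) := hf.isSymmSndFDerivAt (by simp)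
  rw [partialSnd_eq_fderiv_uncurry (differentiableAt_uncurry_partialFst hf),
    partialFst_eq_fderiv_uncurry (differentiableAt_uncurry_partialSnd hf),
    (uncurry_partialFst_eventuallyEq hf₁).fderiv_eq,
    (uncurry_partialSnd_eventuallyEq hf₁).fderiv_eq, h_fderiv_apply, h_fderiv_apply, h_symm.eq]

end PartialDerivatives

section Jacobian

variable {𝕜 : Type*} [NontriviallyNormedField 𝕜]

/-- The Jacobian determinant of `(f, g)`, i.e. the coefficient of `df ∧ dg`. -/
noncomputable def jacobian (f g : 𝕜 → 𝕜 → 𝕜) (x y : 𝕜) : 𝕜 :=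
  partialFst f x y * partialSnd g x y - partialFst g x y * partialSnd f x y

variable {S a b : 𝕜 → 𝕜 → 𝕜} {x y : 𝕜}

theorem jacobian_comp₂_snd (hS : DifferentiableAt 𝕜 (uncurry S) (a x y, b x y))
    (ha : DifferentiableAt 𝕜 (uncurry a) (x, y)) (hb : DifferentiableAt 𝕜 (uncurry b) (x, y)) :
    jacobian (fun x y => S (a x y) (b x y)) b x y =
      partialFst S (a x y) (b x y) * jacobian a b x y := by
  simp only [jacobian, partialFst_comp₂ hS ha hb, partialSnd_comp₂ hS ha hb, smul_eq_mul]
  ring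

theorem jacobian_comp₂_fst (hS : DifferentiableAt 𝕜 (uncurry S) (a x y, b x y))
    (ha : DifferentiableAt 𝕜 (uncurry a) (x, y)) (hb : DifferentiableAt 𝕜 (uncurry b) (x, y)) :
    jacobian (fun x y => S (a x y) (b x y)) a x y =
      -(partialSnd S (a x y) (b x y) * jacobian a b x y) := by
  simp only [jacobian, partialFst_comp₂ hS ha hb, partialSnd_comp₂ hS ha hb, smul_eq_mul]
  ring

end Jacobian

/-- The component `[f] D⟨g⟩ - [g] D⟨f⟩` of the 1-form `[f] d⟨g⟩ - [g] d⟨f⟩` attached to the pairs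
`(f₊, f₋)` and `(g₊, g₋)`, where `D` is one of `partialFst`, `partialSnd`. With `D = partialFst`
it gives the paper's `p*`, `i*`, `j*`, and with `D = partialSnd` its `p`, `i`, `j`. -/
def jumpMeanForm {𝕜 : Type*} [Field 𝕜] (D : (𝕜 → 𝕜 → 𝕜) → 𝕜 → 𝕜 → 𝕜)
    (fP fM gP gM : 𝕜 → 𝕜 → 𝕜) (x y : 𝕜) : 𝕜 :=
  (fP x y - fM x y) * (D gP x y + D gM x y) / 2 - (gP x y - gM x y) * (D fP x y + D fM x y) / 2

theorem hasDerivAt_jump_mul_mean {𝕜 : Type*} [NontriviallyNormedField 𝕜] {fP fM gP gM : 𝕜 → 𝕜}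
    {fP' fM' gP' gM' t : 𝕜} (hfP : HasDerivAt fP fP' t) (hfM : HasDerivAt fM fM' t)
    (hgP : HasDerivAt gP gP' t) (hgM : HasDerivAt gM gM' t) :
    HasDerivAt (fun t => (fP t - fM t) * (gP t + gM t) / 2)
      (((fP' - fM') * (gP t + gM t) + (fP t - fM t) * (gP' + gM')) / 2) t :=
  ((hfP.fun_sub hfM).fun_mul (hgP.fun_add hgM)).div_const 2

theorem partialSnd_jumpMeanForm_sub_partialFst_jumpMeanForm {𝕜 : Type*} [RCLike 𝕜]
    {fP fM gP gM : 𝕜 → 𝕜 → 𝕜} {x y : 𝕜}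
    (hfP : ContDiffAt 𝕜 2 (uncurry fP) (x, y)) (hfM : ContDiffAt 𝕜 2 (uncurry fM) (x, y))
    (hgP : ContDiffAt 𝕜 2 (uncurry gP) (x, y)) (hgM : ContDiffAt 𝕜 2 (uncurry gM) (x, y)) :
    partialSnd (jumpMeanForm partialFst fP fM gP gM) x y -
        partialFst (jumpMeanForm partialSnd fP fM gP gM) x y =
      jacobian gP fP x y - jacobian gM fM x y := by
  have fst {h : 𝕜 → 𝕜 → 𝕜} (hh : ContDiffAt 𝕜 2 (uncurry h) (x, y)) :=
    hasDerivAt_partialFst (hh.differentiableAt two_ne_zero)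
  have snd {h : 𝕜 → 𝕜 → 𝕜} (hh : ContDiffAt 𝕜 2 (uncurry h) (x, y)) :=
    hasDerivAt_partialSnd (hh.differentiableAt two_ne_zero)
  have snd_fst {h : 𝕜 → 𝕜 → 𝕜} (hh : ContDiffAt 𝕜 2 (uncurry h) (x, y)) :=
    hasDerivAt_partialSnd (differentiableAt_uncurry_partialFst hh)
  have fst_snd {h : 𝕜 → 𝕜 → 𝕜} (hh : ContDiffAt 𝕜 2 (uncurry h) (x, y)) :=
    hasDerivAt_partialFst (differentiableAt_uncurry_partialSnd hh)
  have h_snd := (hasDerivAt_jump_mul_mean (snd hfP) (snd hfM) (snd_fst hgP) (snd_fst hgM)).fun_sub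
    (hasDerivAt_jump_mul_mean (snd hgP) (snd hgM) (snd_fst hfP) (snd_fst hfM))
  have h_fst := (hasDerivAt_jump_mul_mean (fst hfP) (fst hfM) (fst_snd hgP) (fst_snd hgM)).fun_sub
    (hasDerivAt_jump_mul_mean (fst hgP) (fst hgM) (fst_snd hfP) (fst_snd hfM))
  refine (congrArg₂ (· - ·) h_snd.deriv h_fst.deriv).trans ?_
  simp only [partialSnd_partialFst_comm hfP, partialSnd_partialFst_comm hfM,
    partialSnd_partialFst_comm hgP, partialSnd_partialFst_comm hgM, jacobian]
  ring

theorem stmt_2_general {𝕜 : Type*} [RCLike 𝕜] {S₀ aP bP aM bM : 𝕜 → 𝕜 → 𝕜} {τ l : 𝕜}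
    (hSP : ContDiffAt 𝕜 2 (uncurry S₀) (aP τ l, bP τ l))
    (hSM : ContDiffAt 𝕜 2 (uncurry S₀) (aM τ l, bM τ l))
    (haP : ContDiffAt 𝕜 2 (uncurry aP) (τ, l)) (hbP : ContDiffAt 𝕜 2 (uncurry bP) (τ, l))
    (haM : ContDiffAt 𝕜 2 (uncurry aM) (τ, l)) (hbM : ContDiffAt 𝕜 2 (uncurry bM) (τ, l)) :
    let SP := fun τ l => S₀ (aP τ l) (bP τ l)
    let SM := fun τ l => S₀ (aM τ l) (bM τ l)
    jacobian aP bP τ l - jacobian aM bM τ l =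
      partialSnd (jumpMeanForm partialFst bP bM aP aM) τ l -
        partialFst (jumpMeanForm partialSnd bP bM aP aM) τ l ∧
    partialFst S₀ (aP τ l) (bP τ l) * jacobian aP bP τ l -
        partialFst S₀ (aM τ l) (bM τ l) * jacobian aM bM τ l =
      partialSnd (jumpMeanForm partialFst bP bM SP SM) τ l -
        partialFst (jumpMeanForm partialSnd bP bM SP SM) τ l ∧
    -(partialSnd S₀ (aP τ l) (bP τ l) * jacobian aP bP τ l -
        partialSnd S₀ (aM τ l) (bM τ l) * jacobian aM bM τ l) =
      partialSnd (jumpMeanForm partialFst aP aM SP SM) τ l -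
        partialFst (jumpMeanForm partialSnd aP aM SP SM) τ l := by
  intro SP SM
  have hSP_comp : ContDiffAt 𝕜 2 (uncurry SP) (τ, l) :=
    ContDiffAt.comp (g := uncurry S₀) (τ, l) hSP (haP.prodMk hbP)
  have hSM_comp : ContDiffAt 𝕜 2 (uncurry SM) (τ, l) :=
    ContDiffAt.comp (g := uncurry S₀) (τ, l) hSM (haM.prodMk hbM)
  have diff {h : 𝕜 → 𝕜 → 𝕜} {z : 𝕜 × 𝕜} (hh : ContDiffAt 𝕜 2 (uncurry h) z) :
      DifferentiableAt 𝕜 (uncurry h) z := hh.differentiableAt two_ne_zero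
  refine ⟨?_, ?_, ?_⟩
  · rw [partialSnd_jumpMeanForm_sub_partialFst_jumpMeanForm hbP hbM haP haM]
  · rw [partialSnd_jumpMeanForm_sub_partialFst_jumpMeanForm hbP hbM hSP_comp hSM_comp,
      jacobian_comp₂_snd (diff hSP) (diff haP) (diff hbP),
      jacobian_comp₂_snd (diff hSM) (diff haM) (diff hbM)]
  · rw [partialSnd_jumpMeanForm_sub_partialFst_jumpMeanForm haP haM hSP_comp hSM_comp,
      jacobian_comp₂_fst (diff hSP) (diff haP) (diff hbP),
      jacobian_comp₂_fst (diff hSM) (diff haM) (diff hbM)]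
    ring

/-- The three divergence-form identities in the proof of Theorem 3.2. -/
theorem stmt_2 (S₀ : ℝ → ℝ → ℝ)
    (hS₀ : ContDiff ℝ 2 fun p : ℝ × ℝ => S₀ p.1 p.2)
    (aP bP aM bM : ℝ → ℝ → ℝ)
    (haP : ContDiff ℝ 2 fun p : ℝ × ℝ => aP p.1 p.2)
    (hbP : ContDiff ℝ 2 fun p : ℝ × ℝ => bP p.1 p.2)
    (haM : ContDiff ℝ 2 fun p : ℝ × ℝ => aM p.1 p.2)
    (hbM : ContDiff ℝ 2 fun p : ℝ × ℝ => bM p.1 p.2)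
    (SP SM uP uM vP vM ωP ωM pstar pp istar ii jstar jj : ℝ → ℝ → ℝ)
    (hSP : ∀ τ l, SP τ l = S₀ (aP τ l) (bP τ l))
    (hSM : ∀ τ l, SM τ l = S₀ (aM τ l) (bM τ l))
    (huP : ∀ τ l, uP τ l = deriv (fun s => S₀ s (bP τ l)) (aP τ l))
    (huM : ∀ τ l, uM τ l = deriv (fun s => S₀ s (bM τ l)) (aM τ l))
    (hvP : ∀ τ l, vP τ l = deriv (fun m => S₀ (aP τ l) m) (bP τ l))
    (hvM : ∀ τ l, vM τ l = deriv (fun m => S₀ (aM τ l) m) (bM τ l))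
    (hωP : ∀ τ l, ωP τ l =
      deriv (fun s => aP s l) τ * deriv (fun m => bP τ m) l -
      deriv (fun s => bP s l) τ * deriv (fun m => aP τ m) l)
    (hωM : ∀ τ l, ωM τ l =
      deriv (fun s => aM s l) τ * deriv (fun m => bM τ m) l -
      deriv (fun s => bM s l) τ * deriv (fun m => aM τ m) l)
    (hpstar : ∀ τ l, pstar τ l =
      (bP τ l - bM τ l) * (deriv (fun s => aP s l) τ + deriv (fun s => aM s l) τ) / 2 -
      (aP τ l - aM τ l) * (deriv (fun s => bP s l) τ + deriv (fun s => bM s l) τ) / 2)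
    (hpp : ∀ τ l, pp τ l =
      (bP τ l - bM τ l) * (deriv (fun m => aP τ m) l + deriv (fun m => aM τ m) l) / 2 -
      (aP τ l - aM τ l) * (deriv (fun m => bP τ m) l + deriv (fun m => bM τ m) l) / 2)
    (histar : ∀ τ l, istar τ l =
      (bP τ l - bM τ l) * (deriv (fun s => SP s l) τ + deriv (fun s => SM s l) τ) / 2 -
      (SP τ l - SM τ l) * (deriv (fun s => bP s l) τ + deriv (fun s => bM s l) τ) / 2)
    (hii : ∀ τ l, ii τ l =
      (bP τ l - bM τ l) * (deriv (fun m => SP τ m) l + deriv (fun m => SM τ m) l) / 2 -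
      (SP τ l - SM τ l) * (deriv (fun m => bP τ m) l + deriv (fun m => bM τ m) l) / 2)
    (hjstar : ∀ τ l, jstar τ l =
      (aP τ l - aM τ l) * (deriv (fun s => SP s l) τ + deriv (fun s => SM s l) τ) / 2 -
      (SP τ l - SM τ l) * (deriv (fun s => aP s l) τ + deriv (fun s => aM s l) τ) / 2)
    (hjj : ∀ τ l, jj τ l =
      (aP τ l - aM τ l) * (deriv (fun m => SP τ m) l + deriv (fun m => SM τ m) l) / 2 -
      (SP τ l - SM τ l) * (deriv (fun m => aP τ m) l + deriv (fun m => aM τ m) l) / 2) :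
    ∀ τ l : ℝ,
      ωP τ l - ωM τ l =
        deriv (fun m => pstar τ m) l - deriv (fun s => pp s l) τ ∧
      uP τ l * ωP τ l - uM τ l * ωM τ l =
        deriv (fun m => istar τ m) l - deriv (fun s => ii s l) τ ∧
      -(vP τ l * ωP τ l - vM τ l * ωM τ l) =
        deriv (fun m => jstar τ m) l - deriv (fun s => jj s l) τ := by
  intro τ l
  rw [hωP, hωM, huP, huM, hvP, hvM, funext₂ hpstar, funext₂ hpp, funext₂ histar, funext₂ hii,
    funext₂ hjstar, funext₂ hjj, funext₂ hSP, funext₂ hSM]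
  exact stmt_2_general hS₀.contDiffAt hS₀.contDiffAt haP.contDiffAt hbP.contDiffAt
    haM.contDiffAt hbM.contDiffAt
end

section
/- Let u,v:ℝ²→ℝ be C¹, let ρ₀:ℝ²→ℝ be a function, and let a,b:ℝ²→ℝ be differentiable functions of (t,l). Define x(t,l):=a+t·u(a,b), y(t,l):=b+t·v(a,b), D(t,l):=(1+t·∂₁u(a,b))(1+t·∂₂v(a,b)) − t²·∂₂u(a,b)·∂₁v(a,b), and suppose D(t,l)≠0; set ρ(t,l):=ρ₀(a,b)/D(t,l). Then at every point: ρ·[∂_lx·(∂_ty − v(a,b)) + ∂_ly·(u(a,b) − ∂_tx)] = −ρ₀(a,b)·(∂_ta·∂_lb − ∂_tb·∂_la). -/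
/-!
With `U = (u, v)`, `A = (a, b)` and `X = A + t U(A)`, both `∂_l X` and `∂_t X - U(A)` are images,
of `∂_l A` and `∂_t A` respectively, under the differential of the flow map `α ↦ α + t U(α)`:
subtracting the velocity cancels the explicit dependence of the flow on time. A linear map scales
areas by its determinant, which is here `D`, and this factor cancels against the one in
`ρ = ρ₀ / D`.
-/

open Module

section PartialDerivatives

variable {𝕜 E F : Type*} [NontriviallyNormedField 𝕜] [NormedAddCommGroup E] [NormedSpace 𝕜 E]
  [NormedAddCommGroup F] [NormedSpace 𝕜 F]

theorem hasDerivAt_comp_prodMk_left {f : 𝕜 × E → F} {s : 𝕜} {p : E}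
    (hf : DifferentiableAt 𝕜 f (s, p)) :
    HasDerivAt (fun r => f (r, p)) (fderiv 𝕜 f (s, p) (1, 0)) s :=
  hf.hasFDerivAt.comp_hasDerivAt s ((hasDerivAt_id s).prodMk (hasDerivAt_const s p))

theorem hasDerivAt_comp_prodMk_right {f : E × 𝕜 → F} {p : E} {s : 𝕜}
    (hf : DifferentiableAt 𝕜 f (p, s)) :
    HasDerivAt (fun r => f (p, r)) (fderiv 𝕜 f (p, s) (0, 1)) s :=
  hf.hasFDerivAt.comp_hasDerivAt s ((hasDerivAt_const s p).prodMk (hasDerivAt_id s))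

theorem deriv_prodMk {f : 𝕜 → E} {g : 𝕜 → F} {s : 𝕜} (hf : DifferentiableAt 𝕜 f s)
    (hg : DifferentiableAt 𝕜 g s) : deriv (fun r => (f r, g r)) s = (deriv f s, deriv g s) :=
  (hf.hasDerivAt.prodMk hg.hasDerivAt).deriv

end PartialDerivatives

section PlanarDeterminants

variable {R : Type*} [CommRing R]

theorem det_finTwoProd_pair (p q : R × R) :
    (Basis.finTwoProd R).det ![p, q] = p.1 * q.2 - q.1 * p.2 := by
  simp [Basis.det_apply, Matrix.det_fin_two, Basis.toMatrix_apply]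

theorem linearMap_det_prod_self (L : R × R →ₗ[R] R × R) :
    LinearMap.det L = (L (1, 0)).1 * (L (0, 1)).2 - (L (0, 1)).1 * (L (1, 0)).2 := by
  rw [← LinearMap.det_toMatrix (Basis.finTwoProd R), Matrix.det_fin_two]
  simp [LinearMap.toMatrix_apply]

end PlanarDeterminants

section FreeStreaming

variable {𝕜 E : Type*} [NontriviallyNormedField 𝕜] [NormedAddCommGroup E] [NormedSpace 𝕜 E]

/-- The free-streaming flow of an initial velocity field `U`: the position at time `t` of the
particle that starts at `α` and keeps its initial velocity `U α`. -/
def freeStreaming (U : E → E) (t : 𝕜) (α : E) : E :=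
  α + t • U α

variable {U : E → E}

theorem hasFDerivAt_freeStreaming (t : 𝕜) {α : E} (hU : DifferentiableAt 𝕜 U α) :
    HasFDerivAt (freeStreaming U t) (.id 𝕜 E + t • fderiv 𝕜 U α) α :=
  (hasFDerivAt_id α).add (hU.hasFDerivAt.const_smul t)

theorem hasDerivAt_freeStreaming_comp (t : 𝕜) {γ : 𝕜 → E} {l : 𝕜}
    (hγ : DifferentiableAt 𝕜 γ l) (hU : DifferentiableAt 𝕜 U (γ l)) :
    HasDerivAt (fun m => freeStreaming U t (γ m))
      (fderiv 𝕜 (freeStreaming U t) (γ l) (deriv γ l)) l :=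
  (hasFDerivAt_freeStreaming t hU).differentiableAt.hasFDerivAt.comp_hasDerivAt l hγ.hasDerivAt

theorem hasDerivAt_freeStreaming_time {γ : 𝕜 → E} {t : 𝕜}
    (hγ : DifferentiableAt 𝕜 γ t) (hU : DifferentiableAt 𝕜 U (γ t)) :
    HasDerivAt (fun s => freeStreaming U s (γ s))
      (fderiv 𝕜 (freeStreaming U t) (γ t) (deriv γ t) + U (γ t)) t := by
  have hUγ : HasDerivAt (fun s => U (γ s)) (fderiv 𝕜 U (γ t) (deriv γ t)) t :=
    hU.hasFDerivAt.comp_hasDerivAt t hγ.hasDerivAt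
  refine (hγ.hasDerivAt.add ((hasDerivAt_id' t).smul hUγ)).congr_deriv ?_
  simp [(hasFDerivAt_freeStreaming t hU).fderiv, add_assoc]

theorem basis_det_deriv_freeStreaming (e : Basis (Fin 2) 𝕜 E) {A : 𝕜 → 𝕜 → E} {t l : 𝕜}
    (hU : DifferentiableAt 𝕜 U (A t l)) (hAt : DifferentiableAt 𝕜 (fun s => A s l) t)
    (hAl : DifferentiableAt 𝕜 (A t) l) :
    e.det ![deriv (fun m => freeStreaming U t (A t m)) l,
        deriv (fun s => freeStreaming U s (A s l)) t - U (A t l)] =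
      (fderiv 𝕜 (freeStreaming U t) (A t l)).det *
        e.det ![deriv (A t) l, deriv (fun s => A s l) t] := by
  rw [(hasDerivAt_freeStreaming_comp t hAl hU).deriv,
    (hasDerivAt_freeStreaming_time hAt hU).deriv, add_sub_cancel_right,
    ContinuousLinearMap.det, ← e.det_comp]
  congr 1
  ext i
  fin_cases i <;> rfl

theorem det_fderiv_freeStreaming_prod {u v : 𝕜 → 𝕜 → 𝕜} (t : 𝕜) {α β : 𝕜}
    (hu : DifferentiableAt 𝕜 (fun p : 𝕜 × 𝕜 => u p.1 p.2) (α, β))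
    (hv : DifferentiableAt 𝕜 (fun p : 𝕜 × 𝕜 => v p.1 p.2) (α, β)) :
    (fderiv 𝕜 (freeStreaming (fun p : 𝕜 × 𝕜 => (u p.1 p.2, v p.1 p.2)) t) (α, β)).det =
      (1 + t * deriv (fun s => u s β) α) * (1 + t * deriv (fun m => v α m) β) -
        t ^ 2 * deriv (fun m => u α m) β * deriv (fun s => v s β) α := by
  rw [(hasFDerivAt_freeStreaming t (hu.prodMk hv)).fderiv, hu.fderiv_prodMk hv,
    ContinuousLinearMap.det, linearMap_det_prod_self]
  simp only [ContinuousLinearMap.coe_coe, add_apply, smul_apply, ContinuousLinearMap.id_apply,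
    ContinuousLinearMap.prod_apply, Prod.smul_mk, Prod.mk_add_mk, smul_eq_mul,
    (hasDerivAt_comp_prodMk_left hu).deriv, (hasDerivAt_comp_prodMk_left hv).deriv,
    (hasDerivAt_comp_prodMk_right hu).deriv, (hasDerivAt_comp_prodMk_right hv).deriv]
  ring

theorem flux_freeStreaming_prod {U : 𝕜 × 𝕜 → 𝕜 × 𝕜} {a b x y : 𝕜 → 𝕜 → 𝕜} {t l : 𝕜}
    (hU : DifferentiableAt 𝕜 U (a t l, b t l))
    (hat : DifferentiableAt 𝕜 (fun s => a s l) t) (hal : DifferentiableAt 𝕜 (fun m => a t m) l)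
    (hbt : DifferentiableAt 𝕜 (fun s => b s l) t) (hbl : DifferentiableAt 𝕜 (fun m => b t m) l)
    (hX : ∀ t l, freeStreaming U t (a t l, b t l) = (x t l, y t l)) :
    deriv (fun m => x t m) l * (deriv (fun s => y s l) t - (U (a t l, b t l)).2) -
        (deriv (fun s => x s l) t - (U (a t l, b t l)).1) * deriv (fun m => y t m) l =
      (fderiv 𝕜 (freeStreaming U t) (a t l, b t l)).det *
        (deriv (fun m => a t m) l * deriv (fun s => b s l) t -
          deriv (fun s => a s l) t * deriv (fun m => b t m) l) := by
  have hAt := hat.prodMk hbt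
  have hAl := hal.prodMk hbl
  have hXt : DifferentiableAt 𝕜 (fun s => (x s l, y s l)) t := by
    simpa only [hX] using (hasDerivAt_freeStreaming_time hAt hU).differentiableAt
  have hXl : DifferentiableAt 𝕜 (fun m => (x t m, y t m)) l := by
    simpa only [hX] using (hasDerivAt_freeStreaming_comp t hAl hU).differentiableAt
  simpa only [hX, deriv_prodMk hXl.fst hXl.snd, deriv_prodMk hXt.fst hXt.snd,
    deriv_prodMk hal hbl, deriv_prodMk hat hbt, det_finTwoProd_pair, Prod.fst_sub, Prod.snd_sub]
    using basis_det_deriv_freeStreaming (A := fun t l => (a t l, b t l))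
      (Basis.finTwoProd 𝕜) hU hAt hAl

end FreeStreaming

theorem stmt_5_general {𝕜 : Type*} [NontriviallyNormedField 𝕜] (u v ρ₀ a b x y D ρ : 𝕜 → 𝕜 → 𝕜)
    (t l : 𝕜)
    (hu : DifferentiableAt 𝕜 (fun p : 𝕜 × 𝕜 => u p.1 p.2) (a t l, b t l))
    (hv : DifferentiableAt 𝕜 (fun p : 𝕜 × 𝕜 => v p.1 p.2) (a t l, b t l))
    (hat : DifferentiableAt 𝕜 (fun s => a s l) t) (hal : DifferentiableAt 𝕜 (fun m => a t m) l)
    (hbt : DifferentiableAt 𝕜 (fun s => b s l) t) (hbl : DifferentiableAt 𝕜 (fun m => b t m) l)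
    (hx : ∀ t l, x t l = a t l + t * u (a t l) (b t l))
    (hy : ∀ t l, y t l = b t l + t * v (a t l) (b t l))
    (hD : D t l =
      (1 + t * deriv (fun s => u s (b t l)) (a t l)) *
        (1 + t * deriv (fun m => v (a t l) m) (b t l)) -
      t ^ 2 * deriv (fun m => u (a t l) m) (b t l) *
        deriv (fun s => v s (b t l)) (a t l))
    (hDne : D t l ≠ 0)
    (hρ : ρ t l = ρ₀ (a t l) (b t l) / D t l) :
    ρ t l * (deriv (fun m => x t m) l *
        (deriv (fun s => y s l) t - v (a t l) (b t l)) +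
      deriv (fun m => y t m) l *
        (u (a t l) (b t l) - deriv (fun s => x s l) t)) =
    -(ρ₀ (a t l) (b t l) *
      (deriv (fun s => a s l) t * deriv (fun m => b t m) l -
       deriv (fun s => b s l) t * deriv (fun m => a t m) l)) := by
  have hX : ∀ t l, freeStreaming (fun p : 𝕜 × 𝕜 => (u p.1 p.2, v p.1 p.2)) t (a t l, b t l) =
      (x t l, y t l) := fun t l => Prod.ext (hx t l).symm (hy t l).symm
  have flux := flux_freeStreaming_prod (hu.prodMk hv) hat hal hbt hbl hX
  rw [det_fderiv_freeStreaming_prod t hu hv, ← hD] at flux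
  rw [hρ, div_mul_eq_mul_div, div_eq_iff hDne]
  linear_combination ρ₀ (a t l) (b t l) * flux

/-- Key algebraic identity in the proof of Theorem 4.1: the mass flux across the
curve `(x(t,l), y(t,l))` equals the rate of swept Lagrangian area. -/
theorem stmt_5 (u v ρ₀ : ℝ → ℝ → ℝ)
    (hu : ContDiff ℝ 1 fun p : ℝ × ℝ => u p.1 p.2)
    (hv : ContDiff ℝ 1 fun p : ℝ × ℝ => v p.1 p.2)
    (a b : ℝ → ℝ → ℝ)
    (ha : Differentiable ℝ fun p : ℝ × ℝ => a p.1 p.2)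
    (hb : Differentiable ℝ fun p : ℝ × ℝ => b p.1 p.2)
    (x y D ρ : ℝ → ℝ → ℝ)
    (hx : ∀ t l, x t l = a t l + t * u (a t l) (b t l))
    (hy : ∀ t l, y t l = b t l + t * v (a t l) (b t l))
    (hD : ∀ t l, D t l =
      (1 + t * deriv (fun s => u s (b t l)) (a t l)) *
        (1 + t * deriv (fun m => v (a t l) m) (b t l)) -
      t ^ 2 * deriv (fun m => u (a t l) m) (b t l) *
        deriv (fun s => v s (b t l)) (a t l))
    (hDne : ∀ t l : ℝ, D t l ≠ 0)
    (hρ : ∀ t l, ρ t l = ρ₀ (a t l) (b t l) / D t l) :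
    ∀ t l : ℝ,
      ρ t l * (deriv (fun m => x t m) l *
          (deriv (fun s => y s l) t - v (a t l) (b t l)) +
        deriv (fun m => y t m) l *
          (u (a t l) (b t l) - deriv (fun s => x s l) t)) =
      -(ρ₀ (a t l) (b t l) *
        (deriv (fun s => a s l) t * deriv (fun m => b t m) l -
         deriv (fun s => b s l) t * deriv (fun m => a t m) l)) := by
  intro t l
  exact stmt_5_general u v ρ₀ a b x y D ρ t l
    (hu.differentiable one_ne_zero _) (hv.differentiable one_ne_zero _)
    (hasDerivAt_comp_prodMk_left (ha (t, l))).differentiableAt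
    (hasDerivAt_comp_prodMk_right (ha (t, l))).differentiableAt
    (hasDerivAt_comp_prodMk_left (hb (t, l))).differentiableAt
    (hasDerivAt_comp_prodMk_right (hb (t, l))).differentiableAt
    hx hy (hD t l) (hDne t l) (hρ t l)
end

section
/- Let T>0, let ρ₀:ℝ²→ℝ be continuous, and for j∈{+,−} let u₀^j,v₀^j:ℝ²→ℝ be C¹ and a_j,b_j:[0,T]×ℝ→ℝ be C¹. Suppose there are functions x,y:[0,T]×ℝ→ℝ with x(t,l) = a_j(t,l) + t·u₀^j(a_j,b_j) and y(t,l) = b_j(t,l) + t·v₀^j(a_j,b_j) for both j=+,−. Define D_j(t,l):=(1+t·∂₁u₀^j(a_j,b_j))(1+t·∂₂v₀^j(a_j,b_j)) − t²·∂₂u₀^j(a_j,b_j)·∂₁v₀^j(a_j,b_j) and assume D_j≠0; set ρ_j:=ρ₀(a_j,b_j)/D_j, u_j:=u₀^j(a_j,b_j), v_j:=v₀^j(a_j,b_j), ω_j:=∂_ta_j·∂_lb_j − ∂_tb_j·∂_la_j. Define P̃(t,l)=∫₀ᵗ(ρ₀(a₊,b₊)ω₊ − ρ₀(a₋,b₋)ω₋)dτ,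 Ĩ(t,l)=∫₀ᵗ(ρ₀(a₊,b₊)u₊ω₊ − ρ₀(a₋,b₋)u₋ω₋)dτ, J̃(t,l)=∫₀ᵗ(ρ₀(a₊,b₊)v₊ω₊ − ρ₀(a₋,b₋)v₋ω₋)dτ, and assume P̃(t,l)>0, ∂_tx = U := Ĩ/P̃ and ∂_ty = V := J̃/P̃ for t∈(0,T]. Then for all t∈(0,T], l∈ℝ: (1) ∂_tP̃ + ∂_lx·[V(ρ₊−ρ₋) − (ρ₊v₊−ρ₋v₋)] + ∂_ly·[(ρ₊u₊−ρ₋u₋) − U(ρ₊−ρ₋)] = 0; (2) ∂_tĨ + ∂_lx·[V(ρ₊u₊−ρ₋u₋) − (ρ₊u₊v₊−ρ₋u₋v₋)] + ∂_ly·[(ρ₊u₊²−ρ₋u₋²) − U(ρ₊u₊−ρ₋u₋)] = 0; (3) ∂_tJ̃ + ∂_lx·[V(ρ₊v₊−ρ₋v₋) − (ρ₊v₊²−ρ₋v₋²)] + ∂_ly·[(ρ₊u₊v₊−ρ₋u₋v₋) − U(ρ₊v₊−ρ₋v₋)] = 0. -/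
/-!
On either side of the shock, differentiating `x = a + t u₀(a, b)` and `y = b + t v₀(a, b)` in `t`
and in `l` gives the matrix identity
`!![x_t - u, x_l; y_t - v, y_l] = (1 + t ∇(u₀, v₀)) * !![a_t, a_l; b_t, b_l]`.
Its determinant, `D ω = (x_t - u) y_l - (y_t - v) x_l`, turns the Lagrangian integrand `ρ₀ q ω`
into the Eulerian flux `ρ q ((x_t - u) y_l - (y_t - v) x_l)` of any quantity `q` relative to the
moving shock. The system is the difference of the two sides for `q = 1, u, v`.
-/

open Function

theorem continuous_comp_slices {W X Y Z L : Type*} [TopologicalSpace W] [TopologicalSpace X]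
    [TopologicalSpace Y] [TopologicalSpace Z] [TopologicalSpace L]
    {f : X → Y → Z} {a : W → L → X} {b : W → L → Y} (hf : Continuous (uncurry f))
    (ha : Continuous (uncurry a)) (hb : Continuous (uncurry b)) (l : L) :
    Continuous fun τ => f (a τ l) (b τ l) :=
  hf.comp₂ (ha.uncurry_right l) (hb.uncurry_right l)

section Derivatives

variable {𝕜 E : Type*} [NontriviallyNormedField 𝕜] [NormedAddCommGroup E] [NormedSpace 𝕜 E]

theorem hasDerivAt_unique_of_eqOn {S : Set 𝕜} {g h : 𝕜 → E} {g' h' : E} {t : 𝕜}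
    (hS : UniqueDiffWithinAt 𝕜 S t) (ht : t ∈ S) (hgh : Set.EqOn g h S)
    (hg : HasDerivAt g g' t) (hh : HasDerivAt h h' t) : g' = h' :=
  hS.eq_deriv _ hg.hasDerivWithinAt (hh.hasDerivWithinAt.congr hgh (hgh ht))

variable {f : 𝕜 → 𝕜 → E}

theorem hasDerivAt_slice_fst {p q : 𝕜} (hf : DifferentiableAt 𝕜 (uncurry f) (p, q)) :
    HasDerivAt (fun s => f s q) (fderiv 𝕜 (uncurry f) (p, q) (1, 0)) p :=
  hf.hasFDerivAt.comp_hasDerivAt (f := fun s => (s, q)) p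
    ((hasDerivAt_id' p).prodMk (hasDerivAt_const p q))

theorem hasDerivAt_slice_snd {p q : 𝕜} (hf : DifferentiableAt 𝕜 (uncurry f) (p, q)) :
    HasDerivAt (fun m => f p m) (fderiv 𝕜 (uncurry f) (p, q) (0, 1)) q :=
  hf.hasFDerivAt.comp_hasDerivAt q ((hasDerivAt_const q p).prodMk (hasDerivAt_id' q))

theorem hasDerivAt_comp_slices {g h : 𝕜 → 𝕜} {g' h' t : 𝕜}
    (hf : DifferentiableAt 𝕜 (uncurry f) (g t, h t))
    (hg : HasDerivAt g g' t) (hh : HasDerivAt h h' t) :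
    HasDerivAt (fun s => f (g s) (h s))
      (g' • deriv (fun s => f s (h t)) (g t) + h' • deriv (fun m => f (g t) m) (h t)) t := by
  have split_direction : (g', h') = g' • ((1 : 𝕜), (0 : 𝕜)) + h' • ((0 : 𝕜), (1 : 𝕜)) := by simp
  rw [(hasDerivAt_slice_fst hf).deriv, (hasDerivAt_slice_snd hf).deriv, ← map_smul, ← map_smul,
    ← map_add, ← split_direction]
  exact hf.hasFDerivAt.comp_hasDerivAt t (hg.prodMk hh)

theorem continuous_deriv_slice_fst (hf : ContDiff 𝕜 1 (uncurry f)) :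
    Continuous fun p : 𝕜 × 𝕜 => deriv (fun s => f s p.2) p.1 := by
  simp_rw [fun p : 𝕜 × 𝕜 => (hasDerivAt_slice_fst (hf.differentiable one_ne_zero p)).deriv]
  exact (hf.continuous_fderiv one_ne_zero).clm_apply continuous_const

theorem continuous_deriv_slice_snd (hf : ContDiff 𝕜 1 (uncurry f)) :
    Continuous fun p : 𝕜 × 𝕜 => deriv (fun m => f p.1 m) p.2 := by
  simp_rw [fun p : 𝕜 × 𝕜 => (hasDerivAt_slice_snd (hf.differentiable one_ne_zero p)).deriv]
  exact (hf.continuous_fderiv one_ne_zero).clm_apply continuous_const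

end Derivatives

/-- The Jacobian determinant `D` at `(α, β)` of the characteristic flow
`(α, β) ↦ (α + t u₀(α, β), β + t v₀(α, β))`. -/
noncomputable def flowJacobian (u₀ v₀ : ℝ → ℝ → ℝ) (t α β : ℝ) : ℝ :=
  (1 + t * deriv (fun s => u₀ s β) α) * (1 + t * deriv (fun m => v₀ α m) β) -
    t ^ 2 * deriv (fun m => u₀ α m) β * deriv (fun s => v₀ s β) α

/-- The Jacobian determinant `ω = a_t b_l - b_t a_l` of the map sending a shock point `(t, l)` to
the starting point of the characteristic reaching it. -/
noncomputable def originJacobian (a b : ℝ → ℝ → ℝ) (t l : ℝ) : ℝ :=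
  deriv (fun s => a s l) t * deriv (fun m => b t m) l -
    deriv (fun s => b s l) t * deriv (fun m => a t m) l

theorem continuous_originJacobian {a b : ℝ → ℝ → ℝ} (ha : ContDiff ℝ 1 (uncurry a))
    (hb : ContDiff ℝ 1 (uncurry b)) : Continuous (uncurry (originJacobian a b)) :=
  ((continuous_deriv_slice_fst ha).mul (continuous_deriv_slice_snd hb)).sub
    ((continuous_deriv_slice_fst hb).mul (continuous_deriv_slice_snd ha))

theorem continuous_initialDensity_mul_mul_originJacobian {ρ₀ a b : ℝ → ℝ → ℝ} {q : ℝ → ℝ}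
    (hρ₀ : Continuous (uncurry ρ₀)) (ha : ContDiff ℝ 1 (uncurry a))
    (hb : ContDiff ℝ 1 (uncurry b)) (hq : Continuous q) (l : ℝ) :
    Continuous fun τ => ρ₀ (a τ l) (b τ l) * q τ * originJacobian a b τ l :=
  ((continuous_comp_slices hρ₀ ha.continuous hb.continuous l).mul hq).mul
    ((continuous_originJacobian ha hb).uncurry_right l)

/-- The trace at the shock point `(t, l)` of the Eulerian density carried by the characteristics
starting at `(a, b)`; it is meaningful only where `flowJacobian` does not vanish. -/
noncomputable def densityTrace (ρ₀ u₀ v₀ a b : ℝ → ℝ → ℝ) (t l : ℝ) : ℝ :=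
  ρ₀ (a t l) (b t l) / flowJacobian u₀ v₀ t (a t l) (b t l)

/-- One side of the shock: at each time in `S`, the shock point `(x, y)` is reached by the
characteristic that starts at `(a, b)` with velocity `(u₀, v₀)`. -/
structure IsShockSide (S : Set ℝ) (x y u₀ v₀ a b : ℝ → ℝ → ℝ) : Prop where
  differentiable_u : Differentiable ℝ (uncurry u₀)
  differentiable_v : Differentiable ℝ (uncurry v₀)
  contDiff_a : ContDiff ℝ 1 (uncurry a)
  contDiff_b : ContDiff ℝ 1 (uncurry b)
  x_eq : ∀ t ∈ S, ∀ l, x t l = a t l + t * u₀ (a t l) (b t l)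
  y_eq : ∀ t ∈ S, ∀ l, y t l = b t l + t * v₀ (a t l) (b t l)

namespace IsShockSide

variable {S : Set ℝ} {ρ₀ x y u₀ v₀ a b : ℝ → ℝ → ℝ} {t l U V : ℝ}

theorem flowJacobian_mul_originJacobian (side : IsShockSide S x y u₀ v₀ a b)
    (hS : UniqueDiffWithinAt ℝ S t) (ht : t ∈ S)
    (hxt : HasDerivAt (fun s => x s l) U t) (hyt : HasDerivAt (fun s => y s l) V t) :
    flowJacobian u₀ v₀ t (a t l) (b t l) * originJacobian a b t l =
      (U - u₀ (a t l) (b t l)) * deriv (fun m => y t m) l -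
        (V - v₀ (a t l) (b t l)) * deriv (fun m => x t m) l := by
  have ha := side.contDiff_a.differentiable one_ne_zero (t, l)
  have hb := side.contDiff_b.differentiable one_ne_zero (t, l)
  have hat := (hasDerivAt_slice_fst ha).differentiableAt.hasDerivAt
  have hbt := (hasDerivAt_slice_fst hb).differentiableAt.hasDerivAt
  have hal := (hasDerivAt_slice_snd ha).differentiableAt.hasDerivAt
  have hbl := (hasDerivAt_slice_snd hb).differentiableAt.hasDerivAt
  have hu := side.differentiable_u (a t l, b t l)
  have hv := side.differentiable_v (a t l, b t l)
  have x_time := hasDerivAt_unique_of_eqOn hS ht (fun s hs => side.x_eq s hs l) hxt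
    (hat.fun_add ((hasDerivAt_id' t).fun_mul (hasDerivAt_comp_slices hu hat hbt)))
  have y_time := hasDerivAt_unique_of_eqOn hS ht (fun s hs => side.y_eq s hs l) hyt
    (hbt.fun_add ((hasDerivAt_id' t).fun_mul (hasDerivAt_comp_slices hv hat hbt)))
  have x_label := (hal.fun_add ((hasDerivAt_comp_slices hu hal hbl).const_mul t)).deriv
  have y_label := (hbl.fun_add ((hasDerivAt_comp_slices hv hal hbl).const_mul t)).deriv
  rw [← funext (side.x_eq t ht)] at x_label
  rw [← funext (side.y_eq t ht)] at y_label
  rw [x_time, y_time, x_label, y_label, flowJacobian, originJacobian]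
  simp only [smul_eq_mul]
  ring

theorem initialDensity_mul_originJacobian (side : IsShockSide S x y u₀ v₀ a b)
    (hS : UniqueDiffWithinAt ℝ S t) (ht : t ∈ S)
    (hD : flowJacobian u₀ v₀ t (a t l) (b t l) ≠ 0)
    (hxt : HasDerivAt (fun s => x s l) U t) (hyt : HasDerivAt (fun s => y s l) V t) :
    ρ₀ (a t l) (b t l) * originJacobian a b t l =
      densityTrace ρ₀ u₀ v₀ a b t l *
        ((U - u₀ (a t l) (b t l)) * deriv (fun m => y t m) l -
          (V - v₀ (a t l) (b t l)) * deriv (fun m => x t m) l) := by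
  rw [← side.flowJacobian_mul_originJacobian hS ht hxt hyt, ← mul_assoc, densityTrace,
    div_mul_cancel₀ _ hD]

end IsShockSide

theorem stmt_6_general {S : Set ℝ} {ρ₀ x y u0P v0P aP bP u0M v0M aM bM : ℝ → ℝ → ℝ}
    (hρ₀ : Continuous (uncurry ρ₀))
    (sideP : IsShockSide S x y u0P v0P aP bP) (sideM : IsShockSide S x y u0M v0M aM bM)
    {t l U V : ℝ} (hS : UniqueDiffWithinAt ℝ S t) (ht : t ∈ S)
    (hDP : flowJacobian u0P v0P t (aP t l) (bP t l) ≠ 0)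
    (hDM : flowJacobian u0M v0M t (aM t l) (bM t l) ≠ 0)
    (hxt : HasDerivAt (fun s => x s l) U t) (hyt : HasDerivAt (fun s => y s l) V t)
    {qP qM : ℝ → ℝ} (hqP : Continuous qP) (hqM : Continuous qM) (t₀ : ℝ) :
    HasDerivAt
      (fun s => ∫ τ in t₀..s, (ρ₀ (aP τ l) (bP τ l) * qP τ * originJacobian aP bP τ l -
        ρ₀ (aM τ l) (bM τ l) * qM τ * originJacobian aM bM τ l))
      (densityTrace ρ₀ u0P v0P aP bP t l * qP t *
          ((U - u0P (aP t l) (bP t l)) * deriv (fun m => y t m) l -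
            (V - v0P (aP t l) (bP t l)) * deriv (fun m => x t m) l) -
        densityTrace ρ₀ u0M v0M aM bM t l * qM t *
          ((U - u0M (aM t l) (bM t l)) * deriv (fun m => y t m) l -
            (V - v0M (aM t l) (bM t l)) * deriv (fun m => x t m) l)) t := by
  have fluxP := sideP.initialDensity_mul_originJacobian (ρ₀ := ρ₀) hS ht hDP hxt hyt
  have fluxM := sideM.initialDensity_mul_originJacobian (ρ₀ := ρ₀) hS ht hDM hxt hyt
  have integrand_continuous :=
    (continuous_initialDensity_mul_mul_originJacobian hρ₀ sideP.contDiff_a sideP.contDiff_b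
        hqP l).fun_sub
      (continuous_initialDensity_mul_mul_originJacobian hρ₀ sideM.contDiff_a sideM.contDiff_b
        hqM l)
  refine (integrand_continuous.integral_hasStrictDerivAt t₀ t).hasDerivAt.congr_deriv ?_
  linear_combination qP t * fluxP - qM t * fluxM

/-- Theorem 4.1 of the paper: the 1-D system (27) governing the evolution of the
mass `P̃` and momenta `Ĩ, J̃` inside the shock of the 2-D pressureless gas. -/
theorem stmt_6
    (T : ℝ) (hT : 0 < T)
    (ρ₀ : ℝ → ℝ → ℝ) (hρ₀ : Continuous fun p : ℝ × ℝ => ρ₀ p.1 p.2)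
    (u0P v0P u0M v0M : ℝ → ℝ → ℝ)
    (hu0P : ContDiff ℝ 1 fun p : ℝ × ℝ => u0P p.1 p.2)
    (hv0P : ContDiff ℝ 1 fun p : ℝ × ℝ => v0P p.1 p.2)
    (hu0M : ContDiff ℝ 1 fun p : ℝ × ℝ => u0M p.1 p.2)
    (hv0M : ContDiff ℝ 1 fun p : ℝ × ℝ => v0M p.1 p.2)
    (aP bP aM bM : ℝ → ℝ → ℝ)
    (haP : ContDiff ℝ 1 fun p : ℝ × ℝ => aP p.1 p.2)
    (hbP : ContDiff ℝ 1 fun p : ℝ × ℝ => bP p.1 p.2)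
    (haM : ContDiff ℝ 1 fun p : ℝ × ℝ => aM p.1 p.2)
    (hbM : ContDiff ℝ 1 fun p : ℝ × ℝ => bM p.1 p.2)
    (x y : ℝ → ℝ → ℝ)
    (hxP : ∀ t ∈ Set.Icc (0:ℝ) T, ∀ l : ℝ,
      x t l = aP t l + t * u0P (aP t l) (bP t l))
    (hxM : ∀ t ∈ Set.Icc (0:ℝ) T, ∀ l : ℝ,
      x t l = aM t l + t * u0M (aM t l) (bM t l))
    (hyP : ∀ t ∈ Set.Icc (0:ℝ) T, ∀ l : ℝ,
      y t l = bP t l + t * v0P (aP t l) (bP t l))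
    (hyM : ∀ t ∈ Set.Icc (0:ℝ) T, ∀ l : ℝ,
      y t l = bM t l + t * v0M (aM t l) (bM t l))
    (DP DM ρP ρM uP vP uM vM ωP ωM : ℝ → ℝ → ℝ)
    (hDP : ∀ t l, DP t l =
      (1 + t * deriv (fun s => u0P s (bP t l)) (aP t l)) *
        (1 + t * deriv (fun m => v0P (aP t l) m) (bP t l)) -
      t ^ 2 * deriv (fun m => u0P (aP t l) m) (bP t l) *
        deriv (fun s => v0P s (bP t l)) (aP t l))
    (hDM : ∀ t l, DM t l =
      (1 + t * deriv (fun s => u0M s (bM t l)) (aM t l)) *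
        (1 + t * deriv (fun m => v0M (aM t l) m) (bM t l)) -
      t ^ 2 * deriv (fun m => u0M (aM t l) m) (bM t l) *
        deriv (fun s => v0M s (bM t l)) (aM t l))
    (hDPne : ∀ t ∈ Set.Icc (0:ℝ) T, ∀ l : ℝ, DP t l ≠ 0)
    (hDMne : ∀ t ∈ Set.Icc (0:ℝ) T, ∀ l : ℝ, DM t l ≠ 0)
    (hρP : ∀ t l, ρP t l = ρ₀ (aP t l) (bP t l) / DP t l)
    (hρM : ∀ t l, ρM t l = ρ₀ (aM t l) (bM t l) / DM t l)
    (huP : ∀ t l, uP t l = u0P (aP t l) (bP t l))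
    (hvP : ∀ t l, vP t l = v0P (aP t l) (bP t l))
    (huM : ∀ t l, uM t l = u0M (aM t l) (bM t l))
    (hvM : ∀ t l, vM t l = v0M (aM t l) (bM t l))
    (hωP : ∀ t l, ωP t l =
      deriv (fun s => aP s l) t * deriv (fun m => bP t m) l -
      deriv (fun s => bP s l) t * deriv (fun m => aP t m) l)
    (hωM : ∀ t l, ωM t l =
      deriv (fun s => aM s l) t * deriv (fun m => bM t m) l -
      deriv (fun s => bM s l) t * deriv (fun m => aM t m) l)
    (Pt It Jt U V : ℝ → ℝ → ℝ)
    (hPt : ∀ t l, Pt t l = ∫ τ in (0:ℝ)..t,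
      (ρ₀ (aP τ l) (bP τ l) * ωP τ l - ρ₀ (aM τ l) (bM τ l) * ωM τ l))
    (hIt : ∀ t l, It t l = ∫ τ in (0:ℝ)..t,
      (ρ₀ (aP τ l) (bP τ l) * uP τ l * ωP τ l -
       ρ₀ (aM τ l) (bM τ l) * uM τ l * ωM τ l))
    (hJt : ∀ t l, Jt t l = ∫ τ in (0:ℝ)..t,
      (ρ₀ (aP τ l) (bP τ l) * vP τ l * ωP τ l -
       ρ₀ (aM τ l) (bM τ l) * vM τ l * ωM τ l))
    (hPpos : ∀ t ∈ Set.Ioc (0:ℝ) T, ∀ l : ℝ, 0 < Pt t l)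
    (hU : ∀ t l, U t l = It t l / Pt t l)
    (hV : ∀ t l, V t l = Jt t l / Pt t l)
    (hxt : ∀ t ∈ Set.Ioc (0:ℝ) T, ∀ l : ℝ,
      HasDerivAt (fun s => x s l) (U t l) t)
    (hyt : ∀ t ∈ Set.Ioc (0:ℝ) T, ∀ l : ℝ,
      HasDerivAt (fun s => y s l) (V t l) t) :
    ∀ t ∈ Set.Ioc (0:ℝ) T, ∀ l : ℝ,
      deriv (fun s => Pt s l) t +
        deriv (fun m => x t m) l *
          (V t l * (ρP t l - ρM t l) - (ρP t l * vP t l - ρM t l * vM t l)) +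
        deriv (fun m => y t m) l *
          ((ρP t l * uP t l - ρM t l * uM t l) - U t l * (ρP t l - ρM t l)) = 0 ∧
      deriv (fun s => It s l) t +
        deriv (fun m => x t m) l *
          (V t l * (ρP t l * uP t l - ρM t l * uM t l) -
            (ρP t l * uP t l * vP t l - ρM t l * uM t l * vM t l)) +
        deriv (fun m => y t m) l *
          ((ρP t l * uP t l ^ 2 - ρM t l * uM t l ^ 2) -
            U t l * (ρP t l * uP t l - ρM t l * uM t l)) = 0 ∧
      deriv (fun s => Jt s l) t +
        deriv (fun m => x t m) l *
          (V t l * (ρP t l * vP t l - ρM t l * vM t l) -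
            (ρP t l * vP t l ^ 2 - ρM t l * vM t l ^ 2)) +
        deriv (fun m => y t m) l *
          ((ρP t l * uP t l * vP t l - ρM t l * uM t l * vM t l) -
            U t l * (ρP t l * vP t l - ρM t l * vM t l)) = 0 := by
  intro t ht l
  obtain rfl := funext₂ hDP
  obtain rfl := funext₂ hDM
  have sideP : IsShockSide (Set.Icc 0 T) x y u0P v0P aP bP :=
    ⟨hu0P.differentiable one_ne_zero, hv0P.differentiable one_ne_zero, haP, hbP, hxP, hyP⟩
  have sideM : IsShockSide (Set.Icc 0 T) x y u0M v0M aM bM :=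
    ⟨hu0M.differentiable one_ne_zero, hv0M.differentiable one_ne_zero, haM, hbM, hxM, hyM⟩
  have ht' := Set.Ioc_subset_Icc_self ht
  have balance {qP qM : ℝ → ℝ} (hqP : Continuous qP) (hqM : Continuous qM) :=
    (stmt_6_general hρ₀ sideP sideM (uniqueDiffOn_Icc hT t ht') ht' (hDPne t ht' l)
      (hDMne t ht' l) (hxt t ht l) (hyt t ht l) hqP hqM 0).deriv
  have mass := balance (qP := 1) (qM := 1) continuous_one continuous_one
  have momentum_x := balance
    (continuous_comp_slices hu0P.continuous haP.continuous hbP.continuous l)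
    (continuous_comp_slices hu0M.continuous haM.continuous hbM.continuous l)
  have momentum_y := balance
    (continuous_comp_slices hv0P.continuous haP.continuous hbP.continuous l)
    (continuous_comp_slices hv0M.continuous haM.continuous hbM.continuous l)
  simp only [originJacobian, densityTrace, flowJacobian, Pi.one_apply, mul_one, ← hωP, ← hωM,
    ← huP, ← huM, ← hvP, ← hvM, ← hρP, ← hρM, ← hPt, ← hIt, ← hJt] at mass momentum_x momentum_y
  exact ⟨by linear_combination mass, by linear_combination momentum_x,
    by linear_combination momentum_y⟩
end

section
/- Let u,v,ρ,ρ̃∈ℝ and T>0. Let P,I,J,x,y:[0,T)×ℝ→ℝ be differentiable in t with ∂_lx and ∂_ly existing, P(t,l)>0, and suppose they satisfy the system: ∂_tP + (ρ−ρ̃)(∂_ly·U − ∂_lx·V) − ρ(∂_ly·u − ∂_lx·v) = 0; ∂_tI + ρu(∂_ly·U − ∂_lx·V) − ρu(∂_ly·u − ∂_lx·v) = 0; ∂_tJ + ρv(∂_ly·U − ∂_lx·V) − ρv(∂_ly·u − ∂_lx·v) = 0; ∂_tx = U := I/P and ∂_ty = V := J/P. Then for all (t,l): u·J(t,l) − v·I(t,l)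 = u·J(0,l) − v·I(0,l) =: C(l), and u·∂_ty(t,l) − v·∂_tx(t,l) = C(l)/P(t,l). -/
/-!
The momentum of the shock is forced along the constant vector `w = (u, v)` only: both momentum
equations have the form `∂ₜ(I, J) = F • (u, v)` with the same scalar
`F = ρ (∂ₗy (u - U) - ∂ₗx (v - V))`. Hence every linear functional that annihilates `w` is constant
along the momentum. Apply this to `φ (a, b) = u b - v a`, and divide by the mass `P` to pass from
momentum to velocity.
-/

theorem eq_of_hasDerivWithinAt_zero {E : Type*} [NormedAddCommGroup E] [NormedSpace ℝ E]
    {S : Set ℝ} (hS : Convex ℝ S) {f : ℝ → E} (hf : ∀ t ∈ S, HasDerivWithinAt f 0 S t)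
    {a b : ℝ} (ha : a ∈ S) (hb : b ∈ S) : f b = f a := by
  have hbound : ‖f b - f a‖ ≤ 0 * ‖b - a‖ :=
    hS.norm_image_sub_le_of_norm_hasDerivWithin_le hf (fun _ _ => norm_zero.le) ha hb
  rwa [zero_mul, norm_le_zero_iff, sub_eq_zero] at hbound

theorem map_eq_of_hasDerivWithinAt_smul_const {E G : Type*}
    [NormedAddCommGroup E] [NormedSpace ℝ E] [NormedAddCommGroup G] [NormedSpace ℝ G]
    {S : Set ℝ} (hS : Convex ℝ S) {M : ℝ → E} {F : ℝ → ℝ} {w : E}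
    (hM : ∀ t ∈ S, HasDerivWithinAt M (F t • w) S t) (φ : E →L[ℝ] G) (hφ : φ w = 0)
    {a b : ℝ} (ha : a ∈ S) (hb : b ∈ S) : φ (M b) = φ (M a) := by
  refine eq_of_hasDerivWithinAt_zero (f := φ ∘ M) hS (fun t ht => ?_) ha hb
  have hφM : HasDerivWithinAt (φ ∘ M) (φ (F t • w)) S t :=
    φ.hasFDerivAt.comp_hasDerivWithinAt t (hM t ht)
  rwa [map_smul, hφ, smul_zero] at hφM

theorem mul_sub_mul_eq_of_hasDerivWithinAt_mul {S : Set ℝ} (hS : Convex ℝ S) {u v : ℝ}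
    {I J F : ℝ → ℝ} (hI : ∀ t ∈ S, HasDerivWithinAt I (F t * u) S t)
    (hJ : ∀ t ∈ S, HasDerivWithinAt J (F t * v) S t) {a b : ℝ} (ha : a ∈ S) (hb : b ∈ S) :
    u * J b - v * I b = u * J a - v * I a := by
  let φ : ℝ × ℝ →L[ℝ] ℝ := u • ContinuousLinearMap.snd ℝ ℝ ℝ - v • ContinuousLinearMap.fst ℝ ℝ ℝ
  have hφ : φ (u, v) = 0 := sub_eq_zero.2 (mul_comm u v)
  exact map_eq_of_hasDerivWithinAt_smul_const hS (M := fun t => (I t, J t))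
    (fun t ht => (hI t ht).prodMk (hJ t ht)) φ hφ ha hb

theorem stmt_7_general {S : Set ℝ} (hS : Convex ℝ S) {u v : ℝ} {P I J U V F : ℝ → ℝ}
    (hP : ∀ t ∈ S, P t ≠ 0)
    (hI : ∀ t ∈ S, HasDerivWithinAt I (F t * u) S t)
    (hJ : ∀ t ∈ S, HasDerivWithinAt J (F t * v) S t)
    (hU : ∀ t ∈ S, P t * U t = I t) (hV : ∀ t ∈ S, P t * V t = J t)
    {a : ℝ} (ha : a ∈ S) :
    ∀ t ∈ S, u * J t - v * I t = u * J a - v * I a ∧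
      u * V t - v * U t = (u * J a - v * I a) / P t := by
  intro t ht
  have hconst : u * J t - v * I t = u * J a - v * I a :=
    mul_sub_mul_eq_of_hasDerivWithinAt_mul hS hI hJ ha ht
  refine ⟨hconst, eq_div_of_mul_eq (hP t ht) ?_⟩
  calc (u * V t - v * U t) * P t = u * (P t * V t) - v * (P t * U t) := by ring
    _ = u * J t - v * I t := by rw [hU t ht, hV t ht]
    _ = u * J a - v * I a := hconst

/-- First integrals (30), (31) of the intra-shock system (29) with constant
external states. -/
theorem stmt_7 (u v ρ ρt T : ℝ) (hT : 0 < T)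
    (P I J x y : ℝ → ℝ → ℝ)
    (hPpos : ∀ t ∈ Set.Ico (0:ℝ) T, ∀ l : ℝ, 0 < P t l)
    (hPd : ∀ t ∈ Set.Ico (0:ℝ) T, ∀ l : ℝ, DifferentiableAt ℝ (fun s => P s l) t)
    (hId : ∀ t ∈ Set.Ico (0:ℝ) T, ∀ l : ℝ, DifferentiableAt ℝ (fun s => I s l) t)
    (hJd : ∀ t ∈ Set.Ico (0:ℝ) T, ∀ l : ℝ, DifferentiableAt ℝ (fun s => J s l) t)
    (hxd : ∀ t ∈ Set.Ico (0:ℝ) T, ∀ l : ℝ, DifferentiableAt ℝ (fun s => x s l) t)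
    (hyd : ∀ t ∈ Set.Ico (0:ℝ) T, ∀ l : ℝ, DifferentiableAt ℝ (fun s => y s l) t)
    (hxl : ∀ t ∈ Set.Ico (0:ℝ) T, ∀ l : ℝ, DifferentiableAt ℝ (fun m => x t m) l)
    (hyl : ∀ t ∈ Set.Ico (0:ℝ) T, ∀ l : ℝ, DifferentiableAt ℝ (fun m => y t m) l)
    (heqP : ∀ t ∈ Set.Ico (0:ℝ) T, ∀ l : ℝ,
      deriv (fun s => P s l) t +
        (ρ - ρt) * (deriv (fun m => y t m) l * (I t l / P t l) -
          deriv (fun m => x t m) l * (J t l / P t l)) -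
        ρ * (deriv (fun m => y t m) l * u - deriv (fun m => x t m) l * v) = 0)
    (heqI : ∀ t ∈ Set.Ico (0:ℝ) T, ∀ l : ℝ,
      deriv (fun s => I s l) t +
        ρ * u * (deriv (fun m => y t m) l * (I t l / P t l) -
          deriv (fun m => x t m) l * (J t l / P t l)) -
        ρ * u * (deriv (fun m => y t m) l * u - deriv (fun m => x t m) l * v) = 0)
    (heqJ : ∀ t ∈ Set.Ico (0:ℝ) T, ∀ l : ℝ,
      deriv (fun s => J s l) t +
        ρ * v * (deriv (fun m => y t m) l * (I t l / P t l) -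
          deriv (fun m => x t m) l * (J t l / P t l)) -
        ρ * v * (deriv (fun m => y t m) l * u - deriv (fun m => x t m) l * v) = 0)
    (hxt : ∀ t ∈ Set.Ico (0:ℝ) T, ∀ l : ℝ,
      deriv (fun s => x s l) t = I t l / P t l)
    (hyt : ∀ t ∈ Set.Ico (0:ℝ) T, ∀ l : ℝ,
      deriv (fun s => y s l) t = J t l / P t l) :
    ∀ t ∈ Set.Ico (0:ℝ) T, ∀ l : ℝ,
      u * J t l - v * I t l = u * J 0 l - v * I 0 l ∧
      u * deriv (fun s => y s l) t - v * deriv (fun s => x s l) t =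
        (u * J 0 l - v * I 0 l) / P t l := by
  intro t ht l
  have hP : ∀ s ∈ Set.Ico 0 T, P s l ≠ 0 := fun s hs => (hPpos s hs l).ne'
  let F : ℝ → ℝ := fun s =>
    ρ * (deriv (fun m => y s m) l * (u - I s l / P s l) -
      deriv (fun m => x s m) l * (v - J s l / P s l))
  have hI : ∀ s ∈ Set.Ico 0 T, HasDerivWithinAt (fun s => I s l) (F s * u) (Set.Ico 0 T) s :=
    fun s hs => (hId s hs l).hasDerivAt.hasDerivWithinAt.congr_deriv
      (by linear_combination heqI s hs l)
  have hJ : ∀ s ∈ Set.Ico 0 T, HasDerivWithinAt (fun s => J s l) (F s * v) (Set.Ico 0 T) s :=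
    fun s hs => (hJd s hs l).hasDerivAt.hasDerivWithinAt.congr_deriv
      (by linear_combination heqJ s hs l)
  exact stmt_7_general (convex_Ico 0 T) hP hI hJ
    (fun s hs => by rw [hxt s hs l, mul_div_cancel₀ _ (hP s hs)])
    (fun s hs => by rw [hyt s hs l, mul_div_cancel₀ _ (hP s hs)])
    (Set.left_mem_Ico.2 hT) t ht
end

section
/- Let u,v,ρ∈ℝ and T>0. Let P,I,J,x,y:(0,T)×ℝ→ℝ with P>0, P twice differentiable in t and such that all the derivatives below exist and mixed partials of x,y commute. Suppose: ∂_tP = ρ·(u·∂_ly − v·∂_lx); ∂_tx = I/P and ∂_ty = J/P; and u·J(t,l) − v·I(t,l) = C(l) for a differentiable function C independent of t. Then ∂_t²P(t,l) = ρ·∂_l[C(l)/P(t,l)] for all (t,l). -/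
/-!
The combination `φ = u y - v x` satisfies `P_t = ρ φ_l`, and `φ_t = (u J - v I) / P = C / P`.
Commuting the mixed partials of `φ` gives `P_tt = ρ φ_lt = ρ φ_tl = ρ (C / P)_l`.
-/

open Topology

section MixedDerivatives

variable {𝕜 F : Type*} [NontriviallyNormedField 𝕜] [NormedAddCommGroup F] [NormedSpace 𝕜 F]

/-- The two mixed second partial derivatives of `f` at `(t, l)` exist and share the value `f'`.
The first-order partials are required to exist only along the line through `(t, l)` on which
they are differentiated again, so that no `deriv` below takes its junk value there. -/
structure HasMixedDerivAt (f : 𝕜 → 𝕜 → F) (f' : F) (t l : 𝕜) : Prop where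
  differentiableAt_fst : ∀ᶠ m in 𝓝 l, DifferentiableAt 𝕜 (fun s => f s m) t
  differentiableAt_snd : ∀ᶠ s in 𝓝 t, DifferentiableAt 𝕜 (fun m => f s m) l
  hasDerivAt_deriv_fst : HasDerivAt (fun m => deriv (fun s => f s m) t) f' l
  hasDerivAt_deriv_snd : HasDerivAt (fun s => deriv (fun m => f s m) l) f' t

namespace HasMixedDerivAt

variable {f g : 𝕜 → 𝕜 → F} {f' g' : F} {t l : 𝕜}

theorem of_deriv_deriv_eq
    (hfst : ∀ᶠ m in 𝓝 l, DifferentiableAt 𝕜 (fun s => f s m) t)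
    (hsnd : ∀ᶠ s in 𝓝 t, DifferentiableAt 𝕜 (fun m => f s m) l)
    (hfst_snd : DifferentiableAt 𝕜 (fun m => deriv (fun s => f s m) t) l)
    (hsnd_fst : DifferentiableAt 𝕜 (fun s => deriv (fun m => f s m) l) t)
    (hcomm : deriv (fun s => deriv (fun m => f s m) l) t =
      deriv (fun m => deriv (fun s => f s m) t) l) :
    HasMixedDerivAt f (deriv (fun m => deriv (fun s => f s m) t) l) t l :=
  ⟨hfst, hsnd, hfst_snd.hasDerivAt, hcomm ▸ hsnd_fst.hasDerivAt⟩

theorem const_smul (c : 𝕜) (hf : HasMixedDerivAt f f' t l) :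
    HasMixedDerivAt (fun s m => c • f s m) (c • f') t l where
  differentiableAt_fst := hf.differentiableAt_fst.mono fun _ h => h.const_smul c
  differentiableAt_snd := hf.differentiableAt_snd.mono fun _ h => h.const_smul c
  hasDerivAt_deriv_fst := (hf.hasDerivAt_deriv_fst.const_smul c).congr_of_eventuallyEq <|
    hf.differentiableAt_fst.mono fun _ h => (h.hasDerivAt.const_smul c).deriv
  hasDerivAt_deriv_snd := (hf.hasDerivAt_deriv_snd.const_smul c).congr_of_eventuallyEq <|
    hf.differentiableAt_snd.mono fun _ h => (h.hasDerivAt.const_smul c).deriv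

theorem sub (hf : HasMixedDerivAt f f' t l) (hg : HasMixedDerivAt g g' t l) :
    HasMixedDerivAt (fun s m => f s m - g s m) (f' - g') t l where
  differentiableAt_fst :=
    (hf.differentiableAt_fst.and hg.differentiableAt_fst).mono fun _ h => h.1.sub h.2
  differentiableAt_snd :=
    (hf.differentiableAt_snd.and hg.differentiableAt_snd).mono fun _ h => h.1.sub h.2
  hasDerivAt_deriv_fst :=
    (hf.hasDerivAt_deriv_fst.sub hg.hasDerivAt_deriv_fst).congr_of_eventuallyEq <|
      (hf.differentiableAt_fst.and hg.differentiableAt_fst).mono fun _ h =>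
        (h.1.hasDerivAt.sub h.2.hasDerivAt).deriv
  hasDerivAt_deriv_snd :=
    (hf.hasDerivAt_deriv_snd.sub hg.hasDerivAt_deriv_snd).congr_of_eventuallyEq <|
      (hf.differentiableAt_snd.and hg.differentiableAt_snd).mono fun _ h =>
        (h.1.hasDerivAt.sub h.2.hasDerivAt).deriv

theorem hasDerivAt_deriv_of_hasDerivAt_smul_deriv {φ P : 𝕜 → 𝕜 → F} {φ' : F} {q : 𝕜 → F} {ρ : 𝕜}
    (hφ : HasMixedDerivAt φ φ' t l)
    (hP : ∀ᶠ s in 𝓝 t, HasDerivAt (fun s' => P s' l) (ρ • deriv (fun m => φ s m) l) s)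
    (hq : ∀ᶠ m in 𝓝 l, HasDerivAt (fun s => φ s m) (q m) t) :
    HasDerivAt (fun s => deriv (fun s' => P s' l) s) (ρ • deriv q l) t := by
  have hq' : HasDerivAt q φ' l :=
    hφ.hasDerivAt_deriv_fst.congr_of_eventuallyEq <| hq.mono fun _ h => h.deriv.symm
  rw [hq'.deriv]
  exact (hφ.hasDerivAt_deriv_snd.const_smul ρ).congr_of_eventuallyEq <| hP.mono fun _ h => h.deriv

end HasMixedDerivAt

end MixedDerivatives

theorem stmt_13_general {𝕜 : Type*} [NontriviallyNormedField 𝕜] {u v ρ t l x' y' : 𝕜}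
    {P I J x y C : 𝕜 → 𝕜 → 𝕜}
    (hP₀ : ∀ᶠ m in 𝓝 l, P t m ≠ 0)
    (hx : HasMixedDerivAt x x' t l) (hy : HasMixedDerivAt y y' t l)
    (hP : ∀ᶠ s in 𝓝 t, HasDerivAt (fun s' => P s' l)
      (ρ * (u * deriv (fun m => y s m) l - v * deriv (fun m => x s m) l)) s)
    (hI : ∀ᶠ m in 𝓝 l, P t m * deriv (fun s => x s m) t = I t m)
    (hJ : ∀ᶠ m in 𝓝 l, P t m * deriv (fun s => y s m) t = J t m)
    (hC : ∀ᶠ m in 𝓝 l, u * J t m - v * I t m = C t m) :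
    HasDerivAt (fun s => deriv (fun s' => P s' l) s)
      (ρ * deriv (fun m => C t m / P t m) l) t := by
  have hφ : HasMixedDerivAt (fun s m => u * y s m - v * x s m) (u * y' - v * x') t l :=
    (hy.const_smul u).sub (hx.const_smul v)
  refine hφ.hasDerivAt_deriv_of_hasDerivAt_smul_deriv ?_ ?_
  · filter_upwards [hP, hx.differentiableAt_snd, hy.differentiableAt_snd] with s hPs hxs hys
    have hφ_l := (hys.hasDerivAt.const_mul u).fun_sub (hxs.hasDerivAt.const_mul v)
    rwa [hφ_l.deriv]
  · filter_upwards [hP₀, hI, hJ, hC, hx.differentiableAt_fst, hy.differentiableAt_fst]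
      with m hPm hIm hJm hCm hxm hym
    have hφ_t := (hym.hasDerivAt.const_mul u).fun_sub (hxm.hasDerivAt.const_mul v)
    convert hφ_t using 1
    rw [div_eq_iff hPm, ← hCm, ← hIm, ← hJm]
    ring

/-- Equation (39) of the paper: with equal constant densities on both sides,
the intra-shock mass satisfies `P̈ = ρ (C(l)/P)_l`. -/
theorem stmt_13 (u v ρ T : ℝ) (hT : 0 < T)
    (P I J x y : ℝ → ℝ → ℝ) (C : ℝ → ℝ)
    (hPpos : ∀ t ∈ Set.Ioo (0:ℝ) T, ∀ l : ℝ, 0 < P t l)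
    (hPd : ∀ t ∈ Set.Ioo (0:ℝ) T, ∀ l : ℝ,
      DifferentiableAt ℝ (fun s => P s l) t)
    (hPd2 : ∀ t ∈ Set.Ioo (0:ℝ) T, ∀ l : ℝ,
      DifferentiableAt ℝ (fun s => deriv (fun s' => P s' l) s) t)
    (hPl : ∀ t ∈ Set.Ioo (0:ℝ) T, ∀ l : ℝ,
      DifferentiableAt ℝ (fun m => P t m) l)
    (hxd : ∀ t ∈ Set.Ioo (0:ℝ) T, ∀ l : ℝ,
      DifferentiableAt ℝ (fun s => x s l) t)
    (hyd : ∀ t ∈ Set.Ioo (0:ℝ) T, ∀ l : ℝ,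
      DifferentiableAt ℝ (fun s => y s l) t)
    (hxl : ∀ t ∈ Set.Ioo (0:ℝ) T, ∀ l : ℝ,
      DifferentiableAt ℝ (fun m => x t m) l)
    (hyl : ∀ t ∈ Set.Ioo (0:ℝ) T, ∀ l : ℝ,
      DifferentiableAt ℝ (fun m => y t m) l)
    (hxlt : ∀ t ∈ Set.Ioo (0:ℝ) T, ∀ l : ℝ,
      DifferentiableAt ℝ (fun s => deriv (fun m => x s m) l) t)
    (hylt : ∀ t ∈ Set.Ioo (0:ℝ) T, ∀ l : ℝ,
      DifferentiableAt ℝ (fun s => deriv (fun m => y s m) l) t)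
    (hxtl : ∀ t ∈ Set.Ioo (0:ℝ) T, ∀ l : ℝ,
      DifferentiableAt ℝ (fun m => deriv (fun s => x s m) t) l)
    (hytl : ∀ t ∈ Set.Ioo (0:ℝ) T, ∀ l : ℝ,
      DifferentiableAt ℝ (fun m => deriv (fun s => y s m) t) l)
    (hxmix : ∀ t ∈ Set.Ioo (0:ℝ) T, ∀ l : ℝ,
      deriv (fun s => deriv (fun m => x s m) l) t =
        deriv (fun m => deriv (fun s => x s m) t) l)
    (hymix : ∀ t ∈ Set.Ioo (0:ℝ) T, ∀ l : ℝ,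
      deriv (fun s => deriv (fun m => y s m) l) t =
        deriv (fun m => deriv (fun s => y s m) t) l)
    (hCd : Differentiable ℝ C)
    (heqP : ∀ t ∈ Set.Ioo (0:ℝ) T, ∀ l : ℝ,
      deriv (fun s => P s l) t =
        ρ * (u * deriv (fun m => y t m) l - v * deriv (fun m => x t m) l))
    (hxt : ∀ t ∈ Set.Ioo (0:ℝ) T, ∀ l : ℝ,
      deriv (fun s => x s l) t = I t l / P t l)
    (hyt : ∀ t ∈ Set.Ioo (0:ℝ) T, ∀ l : ℝ,
      deriv (fun s => y s l) t = J t l / P t l)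
    (hC : ∀ t ∈ Set.Ioo (0:ℝ) T, ∀ l : ℝ, u * J t l - v * I t l = C l) :
    ∀ t ∈ Set.Ioo (0:ℝ) T, ∀ l : ℝ,
      deriv (fun s => deriv (fun s' => P s' l) s) t =
        ρ * deriv (fun m => C m / P t m) l := by
  intro t ht l
  have hIoo : ∀ᶠ s in 𝓝 t, s ∈ Set.Ioo 0 T := isOpen_Ioo.mem_nhds ht
  have hx := HasMixedDerivAt.of_deriv_deriv_eq (.of_forall (hxd t ht))
    (hIoo.mono fun s hs => hxl s hs l) (hxtl t ht l) (hxlt t ht l) (hxmix t ht l)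
  have hy := HasMixedDerivAt.of_deriv_deriv_eq (.of_forall (hyd t ht))
    (hIoo.mono fun s hs => hyl s hs l) (hytl t ht l) (hylt t ht l) (hymix t ht l)
  have hP₀ (m : ℝ) : P t m ≠ 0 := (hPpos t ht m).ne'
  exact (stmt_13_general (C := fun _ => C) (.of_forall hP₀) hx hy
    (hIoo.mono fun s hs => heqP s hs l ▸ (hPd s hs l).hasDerivAt)
    (.of_forall fun m => by rw [hxt t ht m, mul_div_cancel₀ _ (hP₀ m)])
    (.of_forall fun m => by rw [hyt t ht m, mul_div_cancel₀ _ (hP₀ m)])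
    (.of_forall (hC t ht))).deriv
end
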